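/- For every $\epsilon > 0$ and every positive integer $r$ there is a constant $C(\epsilon, r) > 0$ such that the following holds: let $p > 3$ be a prime, $a$ an integer with $\gcd(a, p) = 1$, $c$ an integer, and $H$ a positive integer with $H \le p$. If for all integers $0 \le X, Y \le p-1$ we have $|C_{a,c} \cap B(X, Y; H)| \le 1$, then $H \le C(\epsilon, r) \, p^{(r+1)/(6r) + \epsilon}$. -/

import Mathlib

/-!
The stronger bound `H ≪ p ^ (1 / 6 + ε)` holds, and it implies the claim for all `r` because
`(r + 1) / (6 r) > 1 / 6`.

Put `F(x) = a x³ + c x` and let `χ` be the quadratic character modulo `p`. If every box contains at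
most one point, then `F(x + m) - F(x - m) = 2 (3 a m x² + F(m))` never equals `2 v` for
`2 m, 2 |v| < H`, so `χ(v - F(m)) = -χ(3 a m)` for all short `v` (`quadraticChar_shift`). Moreover the
values `n = F(m)`, `m ≤ J`, are separated by at least `H`. For a prime `s` of size about
`A = p ^ (1 / 6 - η)` and `0 ≤ w < J`, the residue `z = (w - n) / s` satisfies
`z + t = (w + t s - n) / s`, so that `χ(z + 1) = … = χ(z + k)` with `k ≈ log₂ p`. This is the Burgess
amplification, with many different starting points `n` in place of a single interval.

Two facts are opposed to each other (`main_inequality`).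
* There are few such `z`: only `O(k √p)` (`card_pattern_le`). This follows from square-root
  cancellation for sums of `χ` over values of squarefree polynomials, proved here by Stepanov's method
  (`stepanov`, `quadraticChar_sum_le`).
* The residues `(w - n) / s` take many values, because there are few coincidences
  (`card_collision_le`). A coincidence with `s ≠ s'` makes `n s' - n' s` short modulo `p`. If a pair
  `(n, n')` does this for two pairs of primes, then `n` and `n'` are fractions with numerator and
  denominator so small that the relations hold over `ℤ`, and divisibility by `s` together with the
  separation of the `n` bounds their number (`ncard_nearColl_le`).

With `J = p ^ (1 / 6 + η)` the number of triples `(n, w, s)` is about `p ^ (1 / 2 + η)`, which exceeds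
`√p` times logarithms, a contradiction as soon as `H ≥ p ^ (1 / 6 + 2 η)` and `p` is large
(`not_large`).
-/

/-- The modular reduced cubic `C_{a,c}`: points `(x, y)` with `0 ≤ x, y ≤ p - 1`
and `y ≡ a x³ + c x (mod p)`. -/
def cubicPoints (p : ℕ) (a c : ℤ) : Set (ℤ × ℤ) :=
  {q | 0 ≤ q.1 ∧ q.1 ≤ (p : ℤ) - 1 ∧ 0 ≤ q.2 ∧ q.2 ≤ (p : ℤ) - 1 ∧
    Int.ModEq (p : ℤ) q.2 (a * q.1 ^ 3 + c * q.1)}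

/-- The box `B(X, Y; H)`: points `(x, y)` with `x ≡ X + i (mod p)` for some `1 ≤ i ≤ H`
and `y ≡ Y + j (mod p)` for some `1 ≤ j ≤ H`. -/
def box (p : ℕ) (X Y : ℤ) (H : ℕ) : Set (ℤ × ℤ) :=
  {q | (∃ i : ℤ, 1 ≤ i ∧ i ≤ (H : ℤ) ∧ Int.ModEq (p : ℤ) q.1 (X + i)) ∧
       (∃ j : ℤ, 1 ≤ j ∧ j ≤ (H : ℤ) ∧ Int.ModEq (p : ℤ) q.2 (Y + j))}

section

open Polynomial Finset

/-! ### Stepanov's method -/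

/-- The Leibniz numerators `D_{m,l}`: the linear maps on polynomials with
`(f ^ m * u)^(l) = f ^ (m - l) * D_{m,l} u` for `l ≤ m`, defined by the recursion which one more
differentiation imposes. The subtraction `m - l` is truncated, so the maps carry this meaning only
for `l ≤ m`. -/
noncomputable def derivNum {K : Type*} [CommRing K] (f : K[X]) (m : ℕ) : ℕ → K[X] →ₗ[K] K[X]
  | 0 => LinearMap.id
  | l + 1 => LinearMap.mulLeft K f ∘ₗ Polynomial.derivative ∘ₗ derivNum f m l +
      LinearMap.mulLeft K (C ((m - l : ℕ) : K) * derivative f) ∘ₗ derivNum f m l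

theorem iterate_derivative_pow_mul {K : Type*} [CommRing K] (f u : K[X]) (m l : ℕ) (hl : l ≤ m) :
    derivative^[l] (f ^ m * u) = f ^ (m - l) * derivNum f m l u := by
  induction l with
  | zero => simp [derivNum]
  | succ l ih =>
    rw [Function.iterate_succ_apply', ih (by omega), derivative_mul, derivative_pow]
    obtain ⟨t, ht⟩ : ∃ t, m - l = t + 1 := ⟨m - l - 1, by omega⟩
    have ht' : m - (l + 1) = t := by omega
    simp only [derivNum, LinearMap.add_apply, LinearMap.comp_apply, LinearMap.mulLeft_apply, ht, ht']
    simp only [Nat.add_sub_cancel]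
    ring

/-- In characteristic `p` the factor `X ^ (p * j)` is a constant for the derivation. -/
theorem iterate_derivative_mul_X_pow {p : ℕ} (h : (ZMod p)[X]) (j l : ℕ) :
    derivative^[l] (h * X ^ (p * j)) = derivative^[l] h * X ^ (p * j) := by
  induction l with
  | zero => rfl
  | succ l ih =>
    rw [Function.iterate_succ_apply', ih, derivative_mul, Function.iterate_succ_apply']
    simp [derivative_X_pow]

theorem derivNum_mem_degreeLT {K : Type*} [CommRing K] (f u : K[X]) (m l e : ℕ)
    (hu : u ∈ degreeLT K e) : derivNum f m l u ∈ degreeLT K (e + l * f.natDegree) := by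
  induction l with
  | zero => simpa [derivNum] using hu
  | succ l ih =>
    set w := derivNum f m l u with hw
    have key : ∀ a b : K[X], a.natDegree ≤ f.natDegree → b ∈ degreeLT K (e + l * f.natDegree) →
        a * b ∈ degreeLT K (e + (l + 1) * f.natDegree) := by
      intro a b ha hb
      rw [mem_degreeLT] at hb ⊢
      by_cases hb0 : b = 0
      · simp only [hb0, mul_zero, degree_zero]
        exact WithBot.bot_lt_coe _
      rw [degree_eq_natDegree hb0] at hb
      refine lt_of_le_of_lt degree_le_natDegree ?_
      have h1 := natDegree_mul_le (p := a) (q := b)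
      have h2 : b.natDegree < e + l * f.natDegree := by exact_mod_cast hb
      have : (a * b).natDegree < e + (l + 1) * f.natDegree := by
        rw [add_mul, one_mul]; omega
      exact_mod_cast this
    simp only [derivNum, LinearMap.add_apply, LinearMap.comp_apply, LinearMap.mulLeft_apply]
    refine Submodule.add_mem _ (key _ _ le_rfl ?_) (key _ _ ?_ ih)
    · rw [mem_degreeLT] at ih ⊢
      exact lt_of_le_of_lt degree_derivative_le ih
    · refine (natDegree_C_mul_le _ _).trans ((natDegree_derivative_le f).trans (Nat.sub_le _ _))

/-- Siegel-type step of Stepanov's method. For `f(x) ^ g = δ` and `x ^ p = x`, the `l`-th derivative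
at `x` of `∑ j, (f ^ M * u j + f ^ (M + g) * v j) * X ^ (p * j)` is `f(x) ^ (M - l)` times the value
at `x` of the displayed sum, so the vanishing of the latter for all `l < M` gives order of vanishing
`M`. The vanishing amounts to fewer linear conditions than there are coefficients of the `u j`,
`v j`. -/
theorem exists_auxiliary {K : Type*} [Field K] (f : K[X]) (δ : K) (g e J M : ℕ)
    (hdim : M * (e + M * f.natDegree + J) < 2 * J * e) :
    ∃ u v : Fin J → K[X], (∀ j, u j ∈ degreeLT K e) ∧ (∀ j, v j ∈ degreeLT K e) ∧
      (∃ j, u j ≠ 0 ∨ v j ≠ 0) ∧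
      ∀ l < M, ∑ j : Fin J, (derivNum f M l (u j) + C δ * derivNum f (M + g) l (v j)) *
        X ^ (j : ℕ) = 0 := by
  classical
  set n := e + M * f.natDegree + J with hn
  let V := (Fin J → degreeLT K e) × (Fin J → degreeLT K e)
  let G : ℕ → V →ₗ[K] K[X] := fun l => ∑ j : Fin J,
    LinearMap.mulRight K (X ^ (j : ℕ)) ∘ₗ
      (derivNum f M l ∘ₗ (degreeLT K e).subtype ∘ₗ LinearMap.proj j ∘ₗ LinearMap.fst K _ _ +
      LinearMap.mulLeft K (C δ) ∘ₗ derivNum f (M + g) l ∘ₗ (degreeLT K e).subtype ∘ₗ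
        LinearMap.proj j ∘ₗ LinearMap.snd K _ _)
  have hG : ∀ l (x : V), G l x = ∑ j : Fin J, (derivNum f M l (x.1 j : K[X]) +
      C δ * derivNum f (M + g) l (x.2 j : K[X])) * X ^ (j : ℕ) := by
    intro l x
    simp [G, LinearMap.sum_apply]
    rfl
  let T : V →ₗ[K] (Fin M → Fin n → K) :=
    LinearMap.pi fun l => LinearMap.pi fun i => lcoeff K (i : ℕ) ∘ₗ G (l : ℕ)
  have hker : LinearMap.ker T ≠ ⊥ := by
    apply LinearMap.ker_ne_bot_of_finrank_lt
    have h1 : Module.finrank K (degreeLT K e) = e := by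
      rw [(degreeLTEquiv K e).finrank_eq]; simp
    have h2 : Module.finrank K V = 2 * J * e := by
      simp only [V, Module.finrank_prod, Module.finrank_pi_fintype, h1]
      simp; ring
    have h3 : Module.finrank K (Fin M → Fin n → K) = M * n := by
      simp [Module.finrank_pi_fintype]
    rw [h2, h3]; exact hdim
  obtain ⟨x, hx, hx0⟩ := (Submodule.ne_bot_iff _).1 hker
  refine ⟨fun j => x.1 j, fun j => x.2 j, fun j => (x.1 j).2, fun j => (x.2 j).2, ?_, ?_⟩
  · by_contra! hcon
    apply hx0
    ext j : 2
    · exact Subtype.ext (hcon j).1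
    · exact Subtype.ext (hcon j).2
  · intro l hl
    rw [← hG]
    have hdeg : G l x ∈ degreeLT K n := by
      rw [hG]
      refine Submodule.sum_mem _ fun j _ => ?_
      have hmem : derivNum f M l (x.1 j : K[X]) + C δ * derivNum f (M + g) l (x.2 j : K[X]) ∈
          degreeLT K (e + l * f.natDegree) := by
        refine Submodule.add_mem _ (derivNum_mem_degreeLT _ _ _ _ _ (x.1 j).2) ?_
        rw [← smul_eq_C_mul]
        exact Submodule.smul_mem _ _ (derivNum_mem_degreeLT _ _ _ _ _ (x.2 j).2)
      set y := derivNum f M l (x.1 j : K[X]) + C δ * derivNum f (M + g) l (x.2 j : K[X])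
      rw [mem_degreeLT] at hmem ⊢
      by_cases hy : y = 0
      · simp only [hy, zero_mul, degree_zero]; exact WithBot.bot_lt_coe _
      rw [degree_eq_natDegree hy] at hmem
      have h4 : y.natDegree < e + l * f.natDegree := by exact_mod_cast hmem
      refine lt_of_le_of_lt degree_le_natDegree ?_
      have h5 := natDegree_mul_le (p := y) (q := X ^ (j : ℕ))
      rw [natDegree_X_pow] at h5
      have h6 : l * f.natDegree ≤ M * f.natDegree := Nat.mul_le_mul_right _ hl.le
      have h7 := j.2
      have : (y * X ^ (j : ℕ)).natDegree < n := by omega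
      exact_mod_cast this
    ext i
    by_cases hi : i < n
    · have := congrFun (congrFun (LinearMap.mem_ker.1 hx) ⟨l, hl⟩) ⟨i, hi⟩
      simpa [T] using this
    · rw [coeff_zero]
      apply coeff_eq_zero_of_degree_lt
      refine lt_of_lt_of_le (mem_degreeLT.1 hdeg) ?_
      exact_mod_cast not_lt.1 hi

/-- The non-degeneracy step: low-degree `u`, `v` with `u + v f ^ g` divisible by `X ^ p`, where
`p = 2 g + 1`, are zero. Squaring turns the divisibility into `u² f ≡ f(0) v² (mod X ^ p)`, since
`f ^ p = f(X ^ p) ≡ f(0)`. The degree bound makes this an identity, which fails at `r`, where the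
left side has odd and the right side even multiplicity. -/
theorem eq_zero_of_X_pow_dvd {p : ℕ} [Fact p.Prime] (f u v : (ZMod p)[X]) (g e : ℕ) (r : ZMod p)
    (hp : p = 2 * g + 1) (h0 : f.coeff 0 ≠ 0) (hr : f.rootMultiplicity r = 1)
    (he : 2 * e + f.natDegree ≤ p + 1) (hu : u ∈ degreeLT (ZMod p) e) (hv : v ∈ degreeLT (ZMod p) e)
    (hdvd : X ^ p ∣ u + v * f ^ g) : u = 0 ∧ v = 0 := by
  have hf : f ≠ 0 := by rintro rfl; simp at h0
  have h1 : X ^ p ∣ u ^ 2 * f - v ^ 2 * f ^ p := by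
    have : u ^ 2 * f - v ^ 2 * f ^ p = (u + v * f ^ g) * ((u - v * f ^ g) * f) := by
      rw [show f ^ p = f ^ (2 * g + 1) from congrArg (f ^ ·) hp]; ring
    rw [this]; exact Dvd.dvd.mul_right hdvd _
  have h2 : X ^ p ∣ f ^ p - C (f.coeff 0) := by
    rw [← ZMod.expand_card f]
    have : X ∣ f - C (f.coeff 0) := by rw [X_dvd_iff]; simp
    obtain ⟨h, hh⟩ := this
    refine ⟨expand (ZMod p) p h, ?_⟩
    have := congrArg (expand (ZMod p) p) hh
    rwa [map_sub, expand_C, map_mul, expand_X] at this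
  have h3 : X ^ p ∣ u ^ 2 * f - C (f.coeff 0) * v ^ 2 := by
    have := dvd_add h1 (Dvd.dvd.mul_left h2 (v ^ 2))
    convert this using 1; ring
  have hz : u ^ 2 * f - C (f.coeff 0) * v ^ 2 = 0 := by
    have bound : ∀ w : (ZMod p)[X], w ∈ degreeLT (ZMod p) e → w ≠ 0 → w.natDegree < e := by
      intro w hw hw0
      rw [mem_degreeLT, degree_eq_natDegree hw0] at hw
      exact_mod_cast hw
    have hpp : 0 < p := (Fact.out : p.Prime).pos
    have d1 : (u ^ 2 * f).natDegree < p := by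
      by_cases h : u = 0
      · simpa [h] using hpp
      have := bound u hu h
      rw [natDegree_mul (pow_ne_zero _ h) hf, natDegree_pow]; omega
    have d2 : (C (f.coeff 0) * v ^ 2).natDegree < p := by
      by_cases h : v = 0
      · simpa [h] using hpp
      have := bound v hv h
      refine lt_of_le_of_lt (natDegree_C_mul_le _ _) ?_
      rw [natDegree_pow]; omega
    refine eq_zero_of_dvd_of_natDegree_lt h3 ?_
    rw [natDegree_X_pow]
    refine lt_of_le_of_lt (natDegree_sub_le _ _) (max_lt d1 d2)
  have hz' : u ^ 2 * f = C (f.coeff 0) * v ^ 2 := sub_eq_zero.1 hz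
  have hC : C (f.coeff 0) ≠ 0 := C_ne_zero.2 h0
  by_cases hu0 : u = 0
  · refine ⟨hu0, ?_⟩
    rw [hu0] at hz'
    simpa [hC] using hz'.symm
  exfalso
  have hv0 : v ≠ 0 := by
    rintro rfl
    simp [hu0, hf] at hz'
  have := congrArg (rootMultiplicity r) hz'
  rw [rootMultiplicity_mul (mul_ne_zero (pow_ne_zero _ hu0) hf),
    rootMultiplicity_mul (mul_ne_zero hC (pow_ne_zero _ hv0)), hr, rootMultiplicity_C,
    ← count_roots, ← count_roots, roots_pow, roots_pow, Multiset.count_nsmul, Multiset.count_nsmul] at this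
  omega

/-- Stepanov's bound: the auxiliary polynomial vanishes to order `M` at every `x` with
`f(x) ^ g = δ`, is nonzero, and has degree at most the right-hand side. -/
theorem stepanov {p : ℕ} [Fact p.Prime] (f : (ZMod p)[X]) (g e J M : ℕ) (r δ : ZMod p)
    (hp : p = 2 * g + 1) (h0 : f.coeff 0 ≠ 0) (hr : f.rootMultiplicity r = 1)
    (he : 2 * e + f.natDegree ≤ p + 1) (hM : M ≤ p)
    (hdim : M * (e + M * f.natDegree + J) < 2 * J * e) :
    #{x : ZMod p | f.eval x ^ g = δ} * M ≤ (M + g) * f.natDegree + e + p * J := by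
  classical
  have hf : f ≠ 0 := by rintro rfl; simp at h0
  obtain ⟨u, v, hu, hv, hne, hsum⟩ := exists_auxiliary f δ g e J M hdim
  set Φ : (ZMod p)[X] := ∑ j : Fin J, (f ^ M * u j + f ^ (M + g) * v j) * X ^ (p * (j : ℕ)) with hΦ
  have hΦ0 : Φ ≠ 0 := by
    intro hzero
    have hfac : Φ = f ^ M * ∑ j : Fin J, (u j + v j * f ^ g) * X ^ (p * (j : ℕ)) := by
      rw [hΦ, Finset.mul_sum]
      refine Finset.sum_congr rfl fun j _ => ?_
      rw [pow_add]; ring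
    have hs : ∑ j : Fin J, (u j + v j * f ^ g) * X ^ (p * (j : ℕ)) = 0 := by
      rw [hfac] at hzero
      exact (mul_eq_zero.1 hzero).resolve_left (pow_ne_zero _ hf)
    -- At the least index with a nonzero pair, all other terms carry a further factor `X ^ p`.
    obtain ⟨j0, hj0, hmin⟩ := WellFounded.has_min (wellFounded_lt (α := Fin J))
      {j | u j ≠ 0 ∨ v j ≠ 0} hne
    have hd : X ^ p ∣ u j0 + v j0 * f ^ g := by
      rw [← Finset.add_sum_erase _ _ (mem_univ j0)] at hs
      have h1 : X ^ (p * (j0 : ℕ)) * X ^ p ∣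
          ∑ j ∈ univ.erase j0, (u j + v j * f ^ g) * X ^ (p * (j : ℕ)) := by
        refine Finset.dvd_sum fun j hj => ?_
        have hjne := Finset.ne_of_mem_erase hj
        rcases lt_or_gt_of_ne hjne with h | h
        · have := hmin j
          have h2 : u j = 0 ∧ v j = 0 := by
            by_contra hc
            exact hmin j (by simp only [Set.mem_ofPred_eq]; tauto) h
          simp [h2.1, h2.2]
        · rw [← pow_add]
          refine Dvd.dvd.mul_left (pow_dvd_pow _ ?_) _
          have : (j0 : ℕ) + 1 ≤ j := h
          calc p * (j0 : ℕ) + p = p * (j0 + 1) := by ring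
            _ ≤ p * j := Nat.mul_le_mul_left _ this
      have h2 : X ^ (p * (j0 : ℕ)) * X ^ p ∣ (u j0 + v j0 * f ^ g) * X ^ (p * (j0 : ℕ)) := by
        rw [eq_neg_of_add_eq_zero_left hs]
        exact (dvd_neg).2 h1
      rw [mul_comm (u j0 + v j0 * f ^ g)] at h2
      exact (mul_dvd_mul_iff_left (pow_ne_zero _ X_ne_zero)).1 h2
    have := eq_zero_of_X_pow_dvd f (u j0) (v j0) g e r hp h0 hr he (hu j0) (hv j0) hd
    simp only [Set.mem_ofPred_eq] at hj0
    tauto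
  have hdeg : Φ.natDegree ≤ (M + g) * f.natDegree + e + p * J := by
    rw [hΦ]
    refine natDegree_sum_le_of_forall_le _ _ fun j _ => ?_
    have bound : ∀ w : (ZMod p)[X], w ∈ degreeLT (ZMod p) e → w.natDegree ≤ e := by
      intro w hw
      exact natDegree_le_of_degree_le (mem_degreeLT.1 hw).le
    refine natDegree_mul_le.trans ?_
    rw [natDegree_X_pow]
    have hj : p * (j : ℕ) ≤ p * J := Nat.mul_le_mul_left _ j.2.le
    have h1 : (f ^ M * u j).natDegree ≤ (M + g) * f.natDegree + e := by
      refine natDegree_mul_le.trans ?_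
      rw [natDegree_pow]
      have := bound _ (hu j)
      have : M * f.natDegree ≤ (M + g) * f.natDegree := Nat.mul_le_mul_right _ (by omega)
      omega
    have h2 : (f ^ (M + g) * v j).natDegree ≤ (M + g) * f.natDegree + e := by
      refine natDegree_mul_le.trans ?_
      rw [natDegree_pow]
      have := bound _ (hv j)
      omega
    have := (natDegree_add_le (f ^ M * u j) (f ^ (M + g) * v j)).trans (max_le h1 h2)
    omega
  have hroot : ∀ x : ZMod p, f.eval x ^ g = δ → (X - C x) ^ M ∣ Φ := by
    intro x hx
    rcases Nat.eq_zero_or_pos M with hM0 | hMpos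
    · simp [hM0]
    rw [← le_rootMultiplicity_iff hΦ0]
    have : M - 1 < Φ.rootMultiplicity x := by
      apply lt_rootMultiplicity_of_isRoot_iterate_derivative_of_mem_nonZeroDivisors' hΦ0
      · intro l hl
        have hlM : l < M := by omega
        rw [IsRoot, hΦ, iterate_derivative_sum, eval_finsetSum]
        have hterm : ∀ j : Fin J, eval x (derivative^[l]
            ((f ^ M * u j + f ^ (M + g) * v j) * X ^ (p * (j : ℕ)))) =
            f.eval x ^ (M - l) * eval x ((derivNum f M l (u j) +
              C δ * derivNum f (M + g) l (v j)) * X ^ (j : ℕ)) := by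
          intro j
          rw [iterate_derivative_mul_X_pow, iterate_map_add,
            iterate_derivative_pow_mul _ _ _ _ hlM.le,
            iterate_derivative_pow_mul _ _ _ _ (by omega : l ≤ M + g)]
          have : M + g - l = (M - l) + g := by omega
          rw [this]
          simp only [eval_mul, eval_add, eval_pow, eval_X, eval_C, pow_add, hx, pow_mul,
            ZMod.pow_card]
          ring
        rw [Finset.sum_congr rfl fun j _ => hterm j, ← Finset.mul_sum, ← eval_finsetSum,
          hsum l hlM]
        simp
      · intro m hm hm0
        rw [mem_nonZeroDivisors_iff_ne_zero]
        intro hc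
        rw [ZMod.natCast_eq_zero_iff] at hc
        have := Nat.le_of_dvd (Nat.pos_of_ne_zero hm0) hc
        omega
    omega
  set S : Finset (ZMod p) := {x : ZMod p | f.eval x ^ g = δ} with hS
  have hprod : (∏ x ∈ S, (X - C x) ^ M) ∣ Φ := by
    apply Finset.prod_dvd_of_coprime
    · intro x _ y _ hxy
      exact (pairwise_coprime_X_sub_C (s := id) Function.injective_id hxy).pow
    · intro x hx
      exact hroot x (by simpa [hS] using hx)
  have := natDegree_le_of_dvd hprod hΦ0
  rw [Finset.prod_pow, natDegree_pow, natDegree_prod_of_monic _ _ (fun x _ => monic_X_sub_C x)] at this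
  simp only [natDegree_X_sub_C, sum_const, smul_eq_mul, mul_one] at this
  rw [mul_comm]
  omega

/-! ### Character sums and constant patterns -/

theorem card_eval_pow_le {p : ℕ} [Fact p.Prime] (hp2 : p ≠ 2) (f : (ZMod p)[X]) (r δ : ZMod p)
    (h0 : f.coeff 0 ≠ 0) (hr : f.rootMultiplicity r = 1) (hd : 1 ≤ f.natDegree)
    (hdp : (2 * f.natDegree + 4) ^ 2 ≤ p) :
    (#{x : ZMod p | f.eval x ^ (p / 2) = δ} : ℝ) ≤ p / 2 + 15 * f.natDegree * √p := by
  set d := f.natDegree with hdd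
  set N := #{x : ZMod p | f.eval x ^ (p / 2) = δ} with hN
  have hodd : p = 2 * (p / 2) + 1 := by
    have := (Fact.out : p.Prime).eq_two_or_odd
    omega
  -- Stepanov's bound with multiplicity `M ≈ √p` and `J ≈ M / 2 + 2 d`; the term `p J / M` then
  -- contributes `p / 2 + O(d √p)`.
  set M := Nat.sqrt p with hM
  have hM1 : M * M ≤ p := Nat.sqrt_le p
  have hM2 : p < (M + 1) * (M + 1) := Nat.lt_succ_sqrt p
  have hMd : 2 * d + 4 ≤ M := by rw [hM, Nat.le_sqrt']; exact hdp
  have hMp : M ≤ p := Nat.sqrt_le_self p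
  set e := (p - d) / 2 with he
  have hdp' : d ≤ p := by omega
  have hdim : M * (e + M * d + (M / 2 + 2 * d + 4)) < 2 * (M / 2 + 2 * d + 4) * e := by
    have e1 : p ≤ 2 * e + d + 1 := by omega
    have j1 : M + 4 * d + 7 ≤ 2 * (M / 2 + 2 * d + 4) := by omega
    have j2 : 2 * (M / 2 + 2 * d + 4) ≤ 3 * M := by omega
    set J := M / 2 + 2 * d + 4
    have a1 : (M + 4 * d + 7) * e ≤ 2 * J * e := Nat.mul_le_mul_right _ j1
    have a2 : M * (2 * J) ≤ M * (3 * M) := Nat.mul_le_mul_left _ j2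
    have a3 : M * M * d ≤ p * d := Nat.mul_le_mul_right _ hM1
    have a4 : (4 * d + 7) * p ≤ (4 * d + 7) * (2 * e + d + 1) := Nat.mul_le_mul_left _ e1
    nlinarith
  have hst := stepanov f (p / 2) e (M / 2 + 2 * d + 4) M r δ hodd h0 hr (by omega) hMp hdim
  rw [← hN, ← hdd] at hst
  have hsq : √(p : ℝ) ≤ M + 1 := by
    rw [Real.sqrt_le_left (by positivity)]
    have : (p : ℝ) < (M + 1) * (M + 1) := by exact_mod_cast hM2
    nlinarith
  have hsp : √(p : ℝ) * √p = p := Real.mul_self_sqrt (by positivity)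
  have hMr : (6 : ℝ) ≤ M := by
    have : 6 ≤ M := by omega
    exact_mod_cast this
  have hdr : (1 : ℝ) ≤ d := by exact_mod_cast hd
  have hs0 : 0 ≤ √(p : ℝ) := Real.sqrt_nonneg _
  have hM1r : (M : ℝ) * M ≤ p := by exact_mod_cast hM1
  have h1 : (N : ℝ) * M ≤ (M + p / 2) * d + p / 2 + p * (M / 2 + 2 * d + 4) := by
    have c1 : ((p / 2 : ℕ) : ℝ) ≤ p / 2 := Nat.cast_div_le
    have c2 : (e : ℝ) ≤ p / 2 := by
      have : 2 * e ≤ p := by omega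
      have : (2 : ℝ) * e ≤ p := by exact_mod_cast this
      linarith
    have c3 : ((M / 2 : ℕ) : ℝ) ≤ M / 2 := Nat.cast_div_le
    have c4 : (N : ℝ) * M ≤ (M + (p / 2 : ℕ)) * d + e + p * ((M / 2 : ℕ) + 2 * d + 4) := by
      exact_mod_cast hst
    have c5 : (p : ℝ) * ((M / 2 : ℕ) + 2 * d + 4) ≤ p * (M / 2 + 2 * d + 4) := by gcongr
    have c6 : ((M : ℝ) + (p / 2 : ℕ)) * d ≤ (M + p / 2) * d := by gcongr
    linarith
  have h2 : (p : ℝ) ≤ 2 * M * √p := by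
    nlinarith [mul_le_mul_of_nonneg_right hsq hs0]
  have h3 : (N : ℝ) * M ≤ (p / 2 + 15 * d * √p) * M := by
    have hs1 : 1 ≤ √(p : ℝ) := by
      rw [Real.one_le_sqrt]; nlinarith
    have k1 : (p : ℝ) * (5 * d + 9) ≤ 2 * M * √p * (14 * d) := by
      calc (p : ℝ) * (5 * d + 9) ≤ p * (14 * d) := by gcongr; linarith
        _ ≤ 2 * M * √p * (14 * d) := by gcongr
    have k2 : (M : ℝ) * d ≤ M * d * √p := le_mul_of_one_le_right (by positivity) hs1
    nlinarith
  exact le_of_mul_le_mul_right h3 (by linarith)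

/-- Weil-type bound for a one-sided character sum. By Euler's criterion the sum compares the number
of `x` with `f(x) ^ ((p - 1) / 2) = δ` with `p / 2`. Taking `δ = ±1` bounds both signs. -/
theorem quadraticChar_sum_le {p : ℕ} [Fact p.Prime] (hp2 : p ≠ 2) (f : (ZMod p)[X]) (r : ZMod p)
    (δ : ℤ) (hδ : δ = 1 ∨ δ = -1)
    (h0 : f.coeff 0 ≠ 0) (hr : f.rootMultiplicity r = 1) (hd : 1 ≤ f.natDegree)
    (hdp : (2 * f.natDegree + 4) ^ 2 ≤ p) :
    ((∑ x : ZMod p, δ * quadraticChar (ZMod p) (f.eval x) : ℤ) : ℝ) ≤ 31 * f.natDegree * √p := by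
  have hf : f ≠ 0 := by rintro rfl; simp at h0
  have hpt : ∀ x : ZMod p, δ * quadraticChar (ZMod p) (f.eval x) ≤
      2 * (if f.eval x ^ (p / 2) = (δ : ZMod p) then 1 else 0) - 1 +
        (if f.eval x = 0 then 1 else 0) := by
    intro x
    have hchar : ringChar (ZMod p) ≠ 2 := by rwa [ZMod.ringChar_zmod_n]
    by_cases h : f.eval x = 0
    · simp only [h, quadraticChar_zero, mul_zero, if_true]
      split_ifs <;> norm_num
    · have h1 := quadraticChar_eq_pow_of_char_ne_two' hchar (f.eval x)
      rw [ZMod.card] at h1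
      rw [← h1]
      rcases quadraticChar_dichotomy h with h2 | h2 <;> rcases hδ with h3 | h3 <;>
        simp [h2, h3, h]
      all_goals split_ifs <;> norm_num
  have hsum := Finset.sum_le_sum fun x (_ : x ∈ univ) => hpt x
  rw [← mul_sum, sum_add_distrib, sum_sub_distrib, ← mul_sum, sum_boole, sum_boole,
    mul_sum] at hsum
  have hz : #{x : ZMod p | f.eval x = 0} ≤ f.natDegree := by
    refine le_trans ?_ (card_roots' f)
    refine le_trans (card_le_card ?_) (Multiset.toFinset_card_le _)
    intro x hx
    simpa [hf] using hx
  have hcount := card_eval_pow_le hp2 f r (δ : ZMod p) h0 hr hd hdp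
  simp only [sum_const, card_univ, ZMod.card, nsmul_eq_mul, mul_one] at hsum
  have hsum' : ((∑ x : ZMod p, δ * quadraticChar (ZMod p) (f.eval x) : ℤ) : ℝ) ≤
      2 * (#{x : ZMod p | f.eval x ^ (p / 2) = (δ : ZMod p)} : ℝ) - p +
        (#{x : ZMod p | f.eval x = 0} : ℝ) := by exact_mod_cast hsum
  have hz' : (#{x : ZMod p | f.eval x = 0} : ℝ) ≤ f.natDegree := by exact_mod_cast hz
  have hs1 : 1 ≤ √(p : ℝ) := by
    rw [Real.one_le_sqrt]
    exact_mod_cast (Fact.out : p.Prime).one_lt.le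
  have : (f.natDegree : ℝ) ≤ f.natDegree * √p := le_mul_of_one_le_right (by positivity) hs1
  linarith

/-- The number of `z` for which `z - b` has the same quadratic character `δ` for all `b ∈ B`:
`∏ b ∈ B, (1 + δ χ(z - b))` majorises `2 ^ #B` times the indicator, and expanding the product gives
the main term `p` and `2 ^ #B - 1` character sums. -/
theorem card_constant_pattern_le {p : ℕ} [Fact p.Prime] (hp2 : p ≠ 2) (B : Finset (ZMod p))
    (hB0 : 0 ∉ B) (δ : ℤ) (hδ : δ = 1 ∨ δ = -1) (hB : (2 * #B + 4) ^ 2 ≤ p) :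
    (2 : ℝ) ^ #B * #{z : ZMod p | ∀ b ∈ B, quadraticChar (ZMod p) (z - b) = δ} ≤
      p + 2 ^ #B * (31 * #B * √p) := by
  classical
  set χ := quadraticChar (ZMod p)
  have hδ2 : δ * δ = 1 := by rcases hδ with h | h <;> simp [h]
  have hpt : ∀ z : ZMod p, (2 : ℤ) ^ #B * (if ∀ b ∈ B, χ (z - b) = δ then 1 else 0) ≤
      ∏ b ∈ B, (1 + δ * χ (z - b)) := by
    intro z
    split_ifs with h
    · rw [mul_one, ← Finset.prod_const]
      refine le_of_eq (Finset.prod_congr rfl fun b hb => ?_)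
      rw [h b hb, hδ2]; norm_num
    · rw [mul_zero]
      refine Finset.prod_nonneg fun b _ => ?_
      by_cases hz : z - b = 0
      · simp [χ, hz]
      · rcases quadraticChar_dichotomy hz with h2 | h2 <;> rcases hδ with h3 | h3 <;>
          simp [χ, h2, h3]
  have hsum := Finset.sum_le_sum fun x (_ : x ∈ univ) => hpt x
  rw [← mul_sum, sum_boole] at hsum
  have hexp : ∑ z : ZMod p, ∏ b ∈ B, (1 + δ * χ (z - b)) =
      ∑ T ∈ B.powerset, ∑ z : ZMod p,
        δ ^ #T * χ (eval z (∏ b ∈ T, (X - C b))) := by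
    rw [Finset.sum_comm]
    refine Finset.sum_congr rfl fun z _ => ?_
    rw [Finset.prod_one_add]
    refine Finset.sum_congr rfl fun T _ => ?_
    rw [eval_prod, map_prod, Finset.prod_mul_distrib, Finset.prod_const]
    simp
  rw [hexp] at hsum
  have hterm : ∀ T ∈ B.powerset, ((∑ z : ZMod p,
      δ ^ #T * χ (eval z (∏ b ∈ T, (X - C b))) : ℤ) : ℝ) ≤
      (if T = ∅ then (p : ℝ) else 0) + 31 * #B * √p := by
    intro T hT
    rw [mem_powerset] at hT
    split_ifs with hTe
    · subst hTe
      have : (0 : ℝ) ≤ 31 * #B * √p := by positivity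
      simpa [χ] using this
    · obtain ⟨b, hb⟩ := Finset.nonempty_iff_ne_empty.2 hTe
      have hcard : #T ≤ #B := card_le_card hT
      have hnd : (∏ b ∈ T, (X - C b)).natDegree = #T := by
        rw [natDegree_prod_of_monic _ _ fun x _ => monic_X_sub_C x]; simp
      have hpow : δ ^ #T = 1 ∨ δ ^ #T = -1 := by
        rcases hδ with h | h
        · simp [h]
        · rw [h]; exact neg_one_pow_eq_or ℤ _
      have := quadraticChar_sum_le hp2 (∏ b ∈ T, (X - C b)) b (δ ^ #T) hpow ?_ ?_ ?_ ?_
      · rw [zero_add]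
        refine this.trans ?_
        rw [hnd]
        gcongr
      · rw [coeff_zero_eq_eval_zero, eval_prod, Finset.prod_ne_zero_iff]
        intro a ha
        simp only [eval_sub, eval_X, eval_C, zero_sub, ne_eq, neg_eq_zero]
        rintro rfl
        exact hB0 (hT ha)
      · rw [← count_roots, roots_prod_X_sub_C]
        exact Multiset.count_eq_one_of_mem T.nodup hb
      · rw [hnd]; exact Finset.card_pos.2 ⟨b, hb⟩
      · rw [hnd]
        exact le_trans (by gcongr) hB
  have hsumR : ((2 : ℝ) ^ #B * #{z : ZMod p | ∀ b ∈ B, χ (z - b) = δ}) ≤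
      ((∑ T ∈ B.powerset, ∑ z : ZMod p,
        δ ^ #T * χ (eval z (∏ b ∈ T, (X - C b))) : ℤ) : ℝ) := by exact_mod_cast hsum
  refine hsumR.trans ?_
  rw [Int.cast_sum]
  refine (Finset.sum_le_sum hterm).trans ?_
  rw [sum_add_distrib, sum_const, card_powerset]
  simp

/-! ### Near-collisions -/

theorem eq_of_intCast_eq_of_abs_lt {p : ℕ} {a b : ℤ} (h : (a : ZMod p) = b) (hlt : |a - b| < p) :
    a = b := by
  rw [ZMod.intCast_eq_intCast_iff_dvd_sub] at h
  have := Int.eq_zero_of_abs_lt_dvd h (by rwa [abs_sub_comm])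
  omega

/-- `n` is a fraction `E / D` modulo `p` with small numerator and denominator. The bounds are those
obtained by eliminating `n'` between two relations `n s' - n' s = R` with `s, s' ≤ A` and
`|R| ≤ A W`. -/
def IsSmallFrac {p : ℕ} (A W : ℕ) (n : ZMod p) (D E : ℤ) : Prop :=
  D ≠ 0 ∧ |D| ≤ (A : ℤ) ^ 2 ∧ |E| ≤ 2 * (A : ℤ) ^ 2 * W ∧ (D : ZMod p) * n = E

/-- Two different pairs of primes relating the same `n` and `n'` force both to be small fractions with
a common denominator, by Cramer's rule. Primality makes the determinant nonzero. -/
theorem isSmallFrac_of_two {p : ℕ} {A W : ℕ} {n n' : ZMod p} {s s' t t' : ℕ}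
    (hs : s.Prime) (hs' : s'.Prime) (ht : t.Prime)
    (hsA : s ≤ A) (hsA' : s' ≤ A) (htA : t ≤ A) (htA' : t' ≤ A)
    (hss : s ≠ s') (hne : (s, s') ≠ (t, t')) {R S : ℤ}
    (hR : |R| ≤ (A : ℤ) * W) (hS : |S| ≤ (A : ℤ) * W)
    (h1 : n * s' - n' * s = R) (h2 : n * t' - n' * t = S) :
    IsSmallFrac A W n ((s' : ℤ) * t - t' * s) (R * t - S * s) ∧
    IsSmallFrac A W n' ((s' : ℤ) * t - t' * s) (R * t' - S * s') := by
  have hD0 : (s' : ℤ) * t - t' * s ≠ 0 := by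
    intro h
    have h' : s' * t = t' * s := by exact_mod_cast sub_eq_zero.1 h
    have hd : s ∣ s' * t := h' ▸ Dvd.intro_left _ rfl
    rcases (hs.dvd_mul).1 hd with hd | hd
    · exact hss ((Nat.prime_dvd_prime_iff_eq hs hs').1 hd)
    · have hst := (Nat.prime_dvd_prime_iff_eq hs ht).1 hd
      subst hst
      have := Nat.eq_of_mul_eq_mul_right hs.pos h'
      exact hne (by rw [this])
  have hD : |(s' : ℤ) * t - t' * s| ≤ (A : ℤ) ^ 2 := by
    have a1 : s' * t ≤ A * A := Nat.mul_le_mul hsA' htA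
    have a2 : t' * s ≤ A * A := Nat.mul_le_mul htA' hsA
    zify at a1 a2
    have b1 : (0 : ℤ) ≤ (s' : ℤ) * t := by positivity
    have b2 : (0 : ℤ) ≤ (t' : ℤ) * s := by positivity
    rw [abs_le]; constructor <;> nlinarith
  have hE : ∀ a b : ℕ, a ≤ A → b ≤ A → |R * a - S * b| ≤ 2 * (A : ℤ) ^ 2 * W := by
    intro a b ha hb
    have ha' : (a : ℤ) ≤ A := by exact_mod_cast ha
    have hb' : (b : ℤ) ≤ A := by exact_mod_cast hb
    calc |R * a - S * b| ≤ |R * a| + |S * b| := abs_sub _ _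
      _ = |R| * a + |S| * b := by simp [abs_mul]
      _ ≤ (A * W) * A + (A * W) * A := by gcongr
      _ = _ := by ring
  refine ⟨⟨hD0, hD, hE _ _ htA hsA, ?_⟩, ⟨hD0, hD, hE _ _ htA' hsA', ?_⟩⟩
  · push_cast; rw [← h1, ← h2]; ring
  · push_cast; rw [← h1, ← h2]; ring

/-- A relation between two small fractions, cleared of denominators, holds over `ℤ` since both sides
are less than `p` in size. -/
theorem cross_identity {p A W : ℕ} {n n' : ZMod p} {s s' : ℕ} {D E D' E' R : ℤ}
    (hsA : s ≤ A) (hsA' : s' ≤ A) (hp : 5 * A ^ 5 * W < p)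
    (hn : IsSmallFrac A W n D E) (hn' : IsSmallFrac A W n' D' E')
    (hR : |R| ≤ (A : ℤ) * W) (h : n * s' - n' * s = R) :
    s' * E * D' - s * E' * D = R * D * D' := by
  obtain ⟨-, hD, hE, hnD⟩ := hn
  obtain ⟨-, hD', hE', hnD'⟩ := hn'
  have hs : (s : ℤ) ≤ A := by exact_mod_cast hsA
  have hs' : (s' : ℤ) ≤ A := by exact_mod_cast hsA'
  apply eq_of_intCast_eq_of_abs_lt (p := p)
  · push_cast; rw [← hnD, ← hnD', ← h]; ring
  · have hp' : 5 * (A : ℤ) ^ 5 * W < p := by exact_mod_cast hp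
    refine lt_of_le_of_lt ?_ hp'
    calc |s' * E * D' - s * E' * D - R * D * D'|
        ≤ |s' * E * D'| + |s * E' * D| + |R * D * D'| :=
          (abs_sub _ _).trans (by gcongr; exact abs_sub _ _)
      _ = s' * |E| * |D'| + s * |E'| * |D| + |R| * |D| * |D'| := by simp [abs_mul]
      _ ≤ A * (2 * A ^ 2 * W) * A ^ 2 + A * (2 * A ^ 2 * W) * A ^ 2 +
          (A * W) * A ^ 2 * A ^ 2 := by gcongr
      _ = _ := by ring

theorem IsSmallFrac.cast_ne_zero {p A W : ℕ} {n : ZMod p} {D E : ℤ} (hp : A ^ 2 < p)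
    (hn : IsSmallFrac A W n D E) : (D : ZMod p) ≠ 0 := by
  intro h
  refine hn.1 (eq_of_intCast_eq_of_abs_lt (p := p) (by simpa using h) ?_)
  have : (A : ℤ) ^ 2 < p := by exact_mod_cast hp
  simpa using hn.2.1.trans_lt this

/-- For fixed `n`, `s`, `s'` there is at most one partner `n'` whose denominator is prime to `s`: for
two of them `s` divides `R1 - R2`, so that the partners differ modulo `p` by the integer
`(R1 - R2) / s`, which is at most `h` in size, against the separation of `N`. -/
theorem eq_of_same_partner {p : ℕ} [Fact p.Prime] {A A1 W h : ℕ} {N : Finset (ZMod p)}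
    (hsep : ∀ n ∈ N, ∀ n' ∈ N, n ≠ n' → ∀ m : ℤ, |m| ≤ h → n - n' ≠ m)
    (hp : 5 * A ^ 5 * W < p) (hp2 : A ^ 2 < p) (hh : 2 * A * W ≤ A1 * h)
    {n n1 n2 : ZMod p} (hn1 : n1 ∈ N) (hn2 : n2 ∈ N) {s s' : ℕ} (hs : s.Prime)
    (hsA1 : A1 < s) (hsA : s ≤ A) (hsA' : s' ≤ A) {D E D1 E1 D2 E2 R1 R2 : ℤ}
    (hn : IsSmallFrac A W n D E) (f1 : IsSmallFrac A W n1 D1 E1) (f2 : IsSmallFrac A W n2 D2 E2)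
    (hd1 : ¬ (s : ℤ) ∣ D1) (hd2 : ¬ (s : ℤ) ∣ D2)
    (hR1 : |R1| ≤ (A : ℤ) * W) (hR2 : |R2| ≤ (A : ℤ) * W)
    (h1 : n * s' - n1 * s = R1) (h2 : n * s' - n2 * s = R2) : n1 = n2 := by
  have i1 := cross_identity hsA hsA' hp hn f1 hR1 h1
  have i2 := cross_identity hsA hsA' hp hn f2 hR2 h2
  have key : (s : ℤ) * (E2 * D1 - E1 * D2) = (R1 - R2) * (D1 * D2) := by
    have : D * (s * (E2 * D1 - E1 * D2)) = D * ((R1 - R2) * (D1 * D2)) := by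
      linear_combination D2 * i1 - D1 * i2
    exact mul_left_cancel₀ hn.1 this
  have hsZ : Prime (s : ℤ) := Nat.prime_iff_prime_int.1 hs
  have hdvd : (s : ℤ) ∣ R1 - R2 := by
    have : (s : ℤ) ∣ (R1 - R2) * (D1 * D2) := ⟨_, key.symm⟩
    rcases hsZ.dvd_or_dvd this with h | h
    · exact h
    · rcases hsZ.dvd_or_dvd h with h | h <;> contradiction
  obtain ⟨m, hm⟩ := hdvd
  have hs0 : (0 : ℤ) < s := by exact_mod_cast hs.pos
  have key2 : E2 * D1 - E1 * D2 = m * (D1 * D2) := by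
    rw [hm, mul_assoc] at key
    exact mul_left_cancel₀ hs0.ne' key
  have hmod : n2 - n1 = (m : ZMod p) := by
    have hc := congrArg (Int.cast (R := ZMod p)) key2
    push_cast at hc
    rw [← f1.2.2.2, ← f2.2.2.2] at hc
    refine mul_left_cancel₀ (mul_ne_zero (f1.cast_ne_zero hp2) (f2.cast_ne_zero hp2)) ?_
    linear_combination hc
  have hmh : |m| ≤ h := by
    have a1 : (s : ℤ) * |m| ≤ 2 * A * W := by
      calc (s : ℤ) * |m| = |R1 - R2| := by rw [hm, abs_mul]; simp
        _ ≤ |R1| + |R2| := abs_sub _ _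
        _ ≤ A * W + A * W := by gcongr
        _ = _ := by ring
    have a2 : (2 : ℤ) * A * W ≤ A1 * h := by exact_mod_cast hh
    have a3 : (A1 : ℤ) * h ≤ s * h := by gcongr
    exact le_of_mul_le_mul_left (a1.trans (a2.trans a3)) hs0
  by_contra hne
  exact hsep n2 hn2 n1 hn1 (Ne.symm hne) m hmh hmod

theorem card_primes_dvd_le_two {P : Finset ℕ} {A A1 : ℕ} (hP : ∀ s ∈ P, s.Prime ∧ A1 < s)
    (hA : A ^ 2 ≤ A1 ^ 3) {D : ℤ} (hD0 : D ≠ 0) (hD : |D| ≤ (A : ℤ) ^ 2) :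
    #{s ∈ P | ((s : ℕ) : ℤ) ∣ D} ≤ 2 := by
  by_contra! hc
  obtain ⟨a, ha, b, hb, c, hc, hab, hac, hbc⟩ := Finset.two_lt_card.1 hc
  simp only [mem_filter] at ha hb hc
  rw [Int.natCast_dvd] at ha hb hc
  obtain ⟨pa, la⟩ := hP a ha.1
  obtain ⟨pb, lb⟩ := hP b hb.1
  obtain ⟨pc, lc⟩ := hP c hc.1
  have cab := (Nat.coprime_primes pa pb).2 hab
  have cac := (Nat.coprime_primes pa pc).2 hac
  have cbc := (Nat.coprime_primes pb pc).2 hbc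
  have hd : a * b * c ∣ D.natAbs :=
    (cac.mul_left cbc).mul_dvd_of_dvd_of_dvd (cab.mul_dvd_of_dvd_of_dvd ha.2 hb.2) hc.2
  have hle := Nat.le_of_dvd (Int.natAbs_pos.2 hD0) hd
  have hD' : D.natAbs ≤ A ^ 2 := by zify; exact hD
  have : A1 ^ 3 < a * b * c := by
    calc A1 ^ 3 = A1 * A1 * A1 := by ring
      _ < a * b * c := by gcongr
  omega

/-- The quadruples `((n, n'), (s, s'))` from `N` and `P`, with `s ≠ s'`, for which `n s' - n' s` is
represented modulo `p` by an integer of size at most `A W`. -/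
def nearColl {p : ℕ} (A W : ℕ) (N : Finset (ZMod p)) (P : Finset ℕ) :
    Set ((ZMod p × ZMod p) × (ℕ × ℕ)) :=
  {q | q.1.1 ∈ N ∧ q.1.2 ∈ N ∧ q.2.1 ∈ P ∧ q.2.2 ∈ P ∧ q.2.1 ≠ q.2.2 ∧
    ∃ R : ℤ, |R| ≤ (A : ℤ) * W ∧ q.1.1 * q.2.2 - q.1.2 * q.2.1 = R}

/-- The number of near-collisions. Pairs `(n, n')` with a single near-collision contribute at most
`#N ^ 2`. In the others `n` and `n'` are small fractions with chosen denominators `D`, `D'`; those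
with `s ∤ D'` or `s' ∤ D` are counted by `eq_of_same_partner`, and `s ∣ D'`, `s' ∣ D` leaves at most
`2 * 2` pairs `(s, s')`. -/
theorem ncard_nearColl_le {p : ℕ} [Fact p.Prime] {A A1 W h : ℕ} {N : Finset (ZMod p)}
    {P : Finset ℕ} (hP : ∀ s ∈ P, s.Prime ∧ A1 < s ∧ s ≤ A)
    (hsep : ∀ n ∈ N, ∀ n' ∈ N, n ≠ n' → ∀ m : ℤ, |m| ≤ h → n - n' ≠ m)
    (hp : 5 * A ^ 5 * W < p) (hp2 : A ^ 2 < p) (hh : 2 * A * W ≤ A1 * h) (hA : A ^ 2 ≤ A1 ^ 3) :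
    (nearColl A W N P).Finite ∧
      (nearColl A W N P).ncard ≤ 5 * #N ^ 2 + 2 * (#N * #P ^ 2) := by
  classical
  have hfin : (nearColl A W N P).Finite := by
    refine Set.Finite.subset ((N ×ˢ N) ×ˢ (P ×ˢ P)).finite_toSet ?_
    rintro ⟨⟨n, n'⟩, s, s'⟩ ⟨h1, h2, h3, h4, -⟩
    simp only [coe_product, Set.mem_prod, mem_coe]
    exact ⟨⟨h1, h2⟩, h3, h4⟩
  refine ⟨hfin, ?_⟩
  set K : Finset ((ZMod p × ZMod p) × (ℕ × ℕ)) := hfin.toFinset with hK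
  have memK : ∀ q, q ∈ K ↔ q ∈ nearColl A W N P := fun q => by simp [hK]
  rw [Set.ncard_eq_toFinset_card _ hfin, ← hK]
  have hex : ∀ n : ZMod p, ∃ DE : ℤ × ℤ, (∃ D E : ℤ, IsSmallFrac A W n D E) →
      IsSmallFrac A W n DE.1 DE.2 := by
    intro n
    by_cases hb : ∃ D E : ℤ, IsSmallFrac A W n D E
    · obtain ⟨D, E, hDE⟩ := hb
      exact ⟨(D, E), fun _ => hDE⟩
    · exact ⟨(0, 0), fun h => absurd h hb⟩
  -- `F n` is a fixed representation of `n` as a small fraction, and junk if there is none.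
  choose F hF using hex
  set good : Finset ((ZMod p × ZMod p) × (ℕ × ℕ)) := {q ∈ K | ∀ q' ∈ K, q'.1 = q.1 → q' = q}
  set bad : Finset ((ZMod p × ZMod p) × (ℕ × ℕ)) := {q ∈ K | ¬ ∀ q' ∈ K, q'.1 = q.1 → q' = q}
    with hbad
  have hbadF : ∀ q ∈ bad, q ∈ nearColl A W N P ∧ IsSmallFrac A W q.1.1 (F q.1.1).1 (F q.1.1).2 ∧
      IsSmallFrac A W q.1.2 (F q.1.2).1 (F q.1.2).2 := by
    rintro ⟨⟨n, n'⟩, s, s'⟩ hq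
    rw [hbad, mem_filter, memK] at hq
    obtain ⟨hq, hq2⟩ := hq
    refine ⟨hq, ?_⟩
    push Not at hq2
    obtain ⟨⟨⟨m, m'⟩, t, t'⟩, hq', heq, hne⟩ := hq2
    rw [memK] at hq'
    simp only [Prod.mk.injEq] at heq
    obtain ⟨rfl, rfl⟩ := heq
    obtain ⟨-, -, h3, h4, h5, R, hR, hR'⟩ := hq
    obtain ⟨-, -, k3, k4, k5, S, hS, hS'⟩ := hq'
    have := isSmallFrac_of_two (hP _ h3).1 (hP _ h4).1 (hP _ k3).1 (hP _ h3).2.2 (hP _ h4).2.2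
      (hP _ k3).2.2 (hP _ k4).2.2 h5 (by
        intro hc
        apply hne
        simp only [Prod.mk.injEq] at hc ⊢
        exact ⟨trivial, hc.1.symm, hc.2.symm⟩) hR hS hR' hS'
    exact ⟨hF _ ⟨_, _, this.1⟩, hF _ ⟨_, _, this.2⟩⟩
  have c0 : #good ≤ #N ^ 2 := by
    rw [sq, ← card_product]
    refine card_le_card_of_injOn (fun q => q.1) ?_ ?_
    · intro q hq
      rw [mem_coe, mem_filter, memK] at hq
      rw [mem_coe, mem_product]
      exact ⟨hq.1.1, hq.1.2.1⟩
    · intro q hq q' hq' heq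
      rw [mem_coe, mem_filter] at hq hq'
      exact hq'.2 q hq.1 heq
  have c1 : #{q ∈ bad | ¬ (q.2.1 : ℤ) ∣ (F q.1.2).1} ≤ #N * #P ^ 2 := by
    rw [sq, ← card_product, ← card_product]
    refine card_le_card_of_injOn (fun q => (q.1.1, q.2)) ?_ ?_
    · intro q hq
      rw [mem_coe, mem_filter] at hq
      obtain ⟨⟨h1, h2, h3, h4, -⟩, -⟩ := hbadF q hq.1
      rw [mem_coe, mem_product, mem_product]
      exact ⟨h1, h3, h4⟩
    · rintro ⟨⟨n, n'⟩, s, s'⟩ hq ⟨⟨m, m'⟩, t, t'⟩ hq' heq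
      rw [mem_coe, mem_filter] at hq hq'
      simp only [Prod.mk.injEq] at heq
      obtain ⟨rfl, rfl, rfl⟩ := heq
      obtain ⟨⟨h1, h2, h3, h4, h5, R, hR, hR'⟩, f1, f2⟩ := hbadF _ hq.1
      obtain ⟨⟨k1, k2, k3, k4, k5, S, hS, hS'⟩, g1, g2⟩ := hbadF _ hq'.1
      have := eq_of_same_partner hsep hp hp2 hh h2 k2 (hP _ h3).1 (hP _ h3).2.1 (hP _ h3).2.2
        (hP _ h4).2.2 f1 f2 g2 hq.2 hq'.2 hR hS hR' hS'
      simp only at this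
      rw [this]
  have c2 : #{q ∈ bad | ¬ (q.2.2 : ℤ) ∣ (F q.1.1).1} ≤ #N * #P ^ 2 := by
    rw [sq, ← card_product, ← card_product]
    refine card_le_card_of_injOn (fun q => (q.1.2, q.2)) ?_ ?_
    · intro q hq
      rw [mem_coe, mem_filter] at hq
      obtain ⟨⟨h1, h2, h3, h4, -⟩, -⟩ := hbadF q hq.1
      rw [mem_coe, mem_product, mem_product]
      exact ⟨h2, h3, h4⟩
    · rintro ⟨⟨n, n'⟩, s, s'⟩ hq ⟨⟨m, m'⟩, t, t'⟩ hq' heq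
      rw [mem_coe, mem_filter] at hq hq'
      simp only [Prod.mk.injEq] at heq
      obtain ⟨rfl, rfl, rfl⟩ := heq
      obtain ⟨⟨h1, h2, h3, h4, h5, R, hR, hR'⟩, f1, f2⟩ := hbadF _ hq.1
      obtain ⟨⟨k1, k2, k3, k4, k5, S, hS, hS'⟩, g1, g2⟩ := hbadF _ hq'.1
      -- The roles of `(n, s)` and `(n', s')` are exchanged, so the residues change sign.
      have := eq_of_same_partner (R1 := -R) (R2 := -S) hsep hp hp2 hh h1 k1 (hP _ h4).1
        (hP _ h4).2.1 (hP _ h4).2.2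
        (hP _ h3).2.2 f2 f1 g1 hq.2 hq'.2 (by rwa [abs_neg]) (by rwa [abs_neg])
        (by push_cast; rw [← hR']; ring) (by push_cast; rw [← hS']; ring)
      simp only at this
      rw [this]
  have c3 : #{q ∈ bad | (q.2.1 : ℤ) ∣ (F q.1.2).1 ∧ (q.2.2 : ℤ) ∣ (F q.1.1).1} ≤ 4 * #N ^ 2 := by
    rw [sq, ← card_product]
    refine card_le_mul_card_image_of_maps_to (f := fun q => q.1) ?_ 4 ?_
    · intro q hq
      rw [mem_filter] at hq
      obtain ⟨⟨h1, h2, -⟩, -⟩ := hbadF q hq.1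
      rw [mem_product]
      exact ⟨h1, h2⟩
    · rintro ⟨n, n'⟩ -
      rcases Finset.eq_empty_or_nonempty {q ∈ {q ∈ bad | (q.2.1 : ℤ) ∣ (F q.1.2).1 ∧
        (q.2.2 : ℤ) ∣ (F q.1.1).1} | q.1 = (n, n')} with he | ⟨q0, hq0⟩
      · rw [he]; simp
      rw [mem_filter, mem_filter] at hq0
      obtain ⟨-, f1, f2⟩ := hbadF q0 hq0.1.1
      rw [hq0.2] at f1 f2
      have hP' : ∀ s ∈ P, s.Prime ∧ A1 < s := fun s hs => ⟨(hP s hs).1, (hP s hs).2.1⟩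
      have b1 := card_primes_dvd_le_two hP' hA f1.1 f1.2.1
      have b2 := card_primes_dvd_le_two hP' hA f2.1 f2.2.1
      have : #{q ∈ {q ∈ bad | (q.2.1 : ℤ) ∣ (F q.1.2).1 ∧ (q.2.2 : ℤ) ∣ (F q.1.1).1} |
          q.1 = (n, n')} ≤ #({s ∈ P | ((s : ℕ) : ℤ) ∣ (F n').1} ×ˢ
            {s ∈ P | ((s : ℕ) : ℤ) ∣ (F n).1}) := by
        refine card_le_card_of_injOn (fun q => q.2) ?_ ?_
        · rintro q hq
          rw [mem_coe, mem_filter, mem_filter] at hq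
          obtain ⟨⟨h1, h2, h3, h4, -⟩, -⟩ := hbadF q hq.1.1
          rw [mem_coe, mem_product, mem_filter, mem_filter]
          have := hq.1.2
          rw [hq.2] at this
          exact ⟨⟨h3, this.1⟩, h4, this.2⟩
        · intro q hq q' hq' heq
          rw [mem_coe, mem_filter] at hq hq'
          exact Prod.ext (hq.2.trans hq'.2.symm) heq
      refine this.trans ?_
      rw [card_product]
      exact Nat.mul_le_mul b2 b1
  have hsplit : #K = #good + #bad := (card_filter_add_card_filter_not _).symm
  have hbadle : #bad ≤ #{q ∈ bad | ¬ (q.2.1 : ℤ) ∣ (F q.1.2).1} +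
      #{q ∈ bad | ¬ (q.2.2 : ℤ) ∣ (F q.1.1).1} +
      #{q ∈ bad | (q.2.1 : ℤ) ∣ (F q.1.2).1 ∧ (q.2.2 : ℤ) ∣ (F q.1.1).1} := by
    refine le_trans (card_le_card ?_) ((card_union_le _ _).trans
      (Nat.add_le_add_right (card_union_le _ _) _))
    intro q hq
    simp only [mem_union, mem_filter]
    tauto
  omega

/-! ### Coincidences among the ratios -/

theorem natCast_ne_zero_of_lt {p s : ℕ} (hs : 0 < s) (hsp : s < p) : (s : ZMod p) ≠ 0 := by
  intro h
  rw [ZMod.natCast_eq_zero_iff] at h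
  exact absurd (Nat.le_of_dvd hs h) (by omega)

/-- The number of coincidences `(w - n) / s = (w' - n') / s'`. For `s = s'` the separation of `N`
leaves only the trivial ones; for `s ≠ s'` each gives a near-collision, and a near-collision arises
from at most `W / A1 + 1` coincidences since `w` is determined by it modulo `s > A1`. -/
theorem card_collision_le {p : ℕ} [Fact p.Prime] {A A1 W h : ℕ} {N : Finset (ZMod p)}
    {P : Finset ℕ} (hP : ∀ s ∈ P, s.Prime ∧ A1 < s ∧ s ≤ A)
    (hsep : ∀ n ∈ N, ∀ n' ∈ N, n ≠ n' → ∀ m : ℤ, |m| ≤ h → n - n' ≠ m)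
    (hp : 5 * A ^ 5 * W < p) (hp2 : A ^ 2 < p) (hh : 2 * A * W ≤ A1 * h) (hA : A ^ 2 ≤ A1 ^ 3)
    (hWh : W ≤ h) (hWp : 2 * A * W < p) :
    #{q ∈ (N ×ˢ range W ×ˢ P) ×ˢ (N ×ˢ range W ×ˢ P) |
      ((q.1.2.1 : ZMod p) - q.1.1) * q.2.2.2 = ((q.2.2.1 : ZMod p) - q.2.1) * q.1.2.2} ≤
    #N * W * #P + (W / A1 + 1) * (5 * #N ^ 2 + 2 * (#N * #P ^ 2)) := by
  classical
  obtain ⟨hfin, hcard⟩ := ncard_nearColl_le hP hsep hp hp2 hh hA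
  rw [Set.ncard_eq_toFinset_card _ hfin] at hcard
  have hsp : ∀ s ∈ P, (s : ZMod p) ≠ 0 := fun s hs =>
    natCast_ne_zero_of_lt (hP s hs).1.pos (lt_of_le_of_lt ((hP s hs).2.2.trans
      (Nat.le_self_pow two_ne_zero A)) hp2)
  set T := {q ∈ (N ×ˢ range W ×ˢ P) ×ˢ (N ×ˢ range W ×ˢ P) |
      ((q.1.2.1 : ZMod p) - q.1.1) * q.2.2.2 = ((q.2.2.1 : ZMod p) - q.2.1) * q.1.2.2} with hT
  have hdiag : #{q ∈ T | q.1.2.2 = q.2.2.2} ≤ #N * W * #P := by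
    have : #N * W * #P = #(N ×ˢ range W ×ˢ P) := by simp [card_product, mul_assoc]
    rw [this]
    refine card_le_card_of_injOn (fun q => q.1) ?_ ?_
    · intro q hq
      rw [mem_coe, mem_filter, hT, mem_filter, mem_product] at hq
      exact hq.1.1.1
    · have key : ∀ q ∈ T, q.1.2.2 = q.2.2.2 → q.2 = q.1 := by
        rintro ⟨⟨n, w, s⟩, n', w', s'⟩ hq (rfl : s = s')
        simp only [hT, mem_filter, mem_product, mem_range] at hq
        obtain ⟨⟨⟨hn, hw, hs⟩, hn', hw', -⟩, he⟩ := hq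
        have he := mul_right_cancel₀ (hsp s hs) he
        have hlt : |(w : ℤ) - w'| < W := by rw [abs_lt]; omega
        have hnn : n = n' := by
          by_contra hne
          refine hsep n hn n' hn' hne (w - w') (by omega) ?_
          push_cast
          linear_combination -he
        subst hnn
        have hAs := (hP s hs).2.2
        have hs1 := (hP s hs).1.pos
        have hWlt : W ≤ 2 * A * W := Nat.le_mul_of_pos_left W (by omega)
        have : (w : ℤ) = w' := by
          apply eq_of_intCast_eq_of_abs_lt (p := p)
          · push_cast; linear_combination he
          · omega
        have : w = w' := by exact_mod_cast this
        subst this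
        rfl
      intro q hq q' hq' heq
      rw [mem_coe, mem_filter] at hq hq'
      refine Prod.ext heq ?_
      rw [key q hq.1 hq.2, key q' hq'.1 hq'.2]
      exact heq
  have hoff : #{q ∈ T | ¬ q.1.2.2 = q.2.2.2} ≤ (W / A1 + 1) * #hfin.toFinset := by
    have : (W / A1 + 1) * #hfin.toFinset = #(range (W / A1 + 1) ×ˢ hfin.toFinset) := by
      simp [card_product]
    rw [this]
    refine card_le_card_of_injOn
      (fun q => (q.1.2.1 / q.1.2.2, ((q.1.1, q.2.1), (q.1.2.2, q.2.2.2)))) ?_ ?_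
    · rintro ⟨⟨n, w, s⟩, n', w', s'⟩ hq
      simp only [hT, coe_filter, mem_filter, mem_product, mem_range, Set.mem_ofPred_eq] at hq
      obtain ⟨⟨⟨⟨hn, hw, hs⟩, hn', hw', hs'⟩, he⟩, hne⟩ := hq
      simp only [mem_coe, mem_product, mem_range, Set.Finite.mem_toFinset]
      constructor
      · rcases Nat.eq_zero_or_pos A1 with h0 | h0
        · subst h0
          have : A = 0 := by
            have := hA; simp at this; exact this
          have := (hP s hs).1.pos
          have := (hP s hs).2.2
          omega
        · have : w / s ≤ W / A1 := Nat.div_le_div hw.le (hP s hs).2.1.le h0.ne'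
          omega
      · refine ⟨hn, hn', hs, hs', hne, w * s' - w' * s, ?_, ?_⟩
        · have a1 : w * s' ≤ W * A := Nat.mul_le_mul hw.le (hP s' hs').2.2
          have a2 : w' * s ≤ W * A := Nat.mul_le_mul hw'.le (hP s hs).2.2
          zify at a1 a2
          have b1 : (0 : ℤ) ≤ (w : ℤ) * s' := by positivity
          have b2 : (0 : ℤ) ≤ (w' : ℤ) * s := by positivity
          rw [abs_le]; constructor <;> nlinarith
        · push_cast
          linear_combination -he
    · rintro ⟨⟨n, w, s⟩, n', w', s'⟩ hq ⟨⟨m, v, t⟩, m', v', t'⟩ hq' heq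
      simp only [hT, coe_filter, mem_filter, mem_product, mem_range, Set.mem_ofPred_eq] at hq hq'
      simp only [Prod.mk.injEq] at heq
      obtain ⟨hdiv, ⟨rfl, rfl⟩, rfl, rfl⟩ := heq
      obtain ⟨⟨⟨⟨hn, hw, hs⟩, hn', hw', hs'⟩, he⟩, hne⟩ := hq
      obtain ⟨⟨⟨⟨-, hv, -⟩, -, hv', -⟩, he'⟩, -⟩ := hq'
      have hs1 := (hP s hs).1.pos
      have hsA := (hP s hs).2.2
      have hsA' := (hP s' hs').2.2
      have e1 : ((w : ℤ) - v) * s' = (w' - v') * s := by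
        apply eq_of_intCast_eq_of_abs_lt (p := p)
        · push_cast; linear_combination he - he'
        · have l1 : |(w : ℤ) - v| ≤ W := by rw [abs_le]; omega
          have l2 : |(w' : ℤ) - v'| ≤ W := by rw [abs_le]; omega
          have hsA2 : (s : ℤ) ≤ A := by exact_mod_cast hsA
          have hsA2' : (s' : ℤ) ≤ A := by exact_mod_cast hsA'
          calc |((w : ℤ) - v) * s' - (w' - v') * s| ≤ |((w : ℤ) - v) * s'| + |((w' : ℤ) - v') * s| :=
                abs_sub _ _
            _ = |(w : ℤ) - v| * s' + |(w' : ℤ) - v'| * s := by simp [abs_mul]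
            _ ≤ W * A + W * A := by gcongr
            _ = (2 * A * W : ℕ) := by push_cast; ring
            _ < p := by exact_mod_cast hWp
      have hdvd : (s : ℤ) ∣ w - v := by
        have : (s : ℤ) ∣ (w - v) * s' := ⟨w' - v', by rw [e1]; ring⟩
        rcases (Nat.prime_iff_prime_int.1 (hP s hs).1).dvd_or_dvd this with h | h
        · exact h
        · exact absurd ((Nat.prime_dvd_prime_iff_eq (hP s hs).1 (hP s' hs').1).1
            (by exact_mod_cast h)) hne
      have hmod : v % s = w % s := (Nat.modEq_iff_dvd.2 hdvd : v ≡ w [MOD s])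
      have hwv : w = v := by
        rw [← Nat.div_add_mod w s, ← Nat.div_add_mod v s, hdiv, hmod]
      subst hwv
      have : (w' : ℤ) = v' := by
        have hs0 : (s : ℤ) ≠ 0 := by exact_mod_cast hs1.ne'
        have : ((w' : ℤ) - v') * s = 0 := by rw [← e1]; ring
        rcases mul_eq_zero.1 this with h | h
        · omega
        · exact absurd h hs0
      have : w' = v' := by exact_mod_cast this
      subst this
      rfl
  have hsplit : #{q ∈ T | q.1.2.2 = q.2.2.2} + #{q ∈ T | ¬ q.1.2.2 = q.2.2.2} = #T :=
    card_filter_add_card_filter_not _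
  have := Nat.mul_le_mul_left (W / A1 + 1) hcard
  omega

/-- Cauchy–Schwarz: a map with few coincidences has a large image. -/
theorem sq_card_le_card_mul_card_collision {α β : Type*} [DecidableEq β] (X : Finset α)
    (S : Finset β) (f : α → β) (hf : ∀ x ∈ X, f x ∈ S) :
    #X ^ 2 ≤ #S * #{q ∈ X ×ˢ X | f q.1 = f q.2} := by
  have h1 := card_eq_sum_card_fiberwise (f := f) (s := X) (t := S) (fun x hx => hf x hx)
  have h2 : #{q ∈ X ×ˢ X | f q.1 = f q.2} = ∑ b ∈ S, #{x ∈ X | f x = b} ^ 2 := by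
    rw [card_eq_sum_card_fiberwise (f := fun q => f q.1) (t := S)]
    · refine sum_congr rfl fun b _ => ?_
      rw [sq, ← card_product]
      congr 1
      ext ⟨x, y⟩
      simp only [mem_filter, mem_product]
      constructor
      · rintro ⟨⟨⟨hx, hy⟩, he⟩, hb⟩
        exact ⟨⟨hx, hb⟩, hy, he ▸ hb⟩
      · rintro ⟨⟨hx, hb⟩, hy, hb'⟩
        exact ⟨⟨⟨hx, hy⟩, hb.trans hb'.symm⟩, hb⟩
    · intro q hq
      rw [mem_coe, mem_filter, mem_product] at hq
      exact hf _ hq.1.1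
  rw [h2, h1]
  exact sq_sum_le_card_mul_sum_sq

/-- Any set containing all the ratios `(w - n) / s` is large. -/
theorem sq_card_le_of_image {p : ℕ} [Fact p.Prime] {A A1 W h : ℕ} {N : Finset (ZMod p)}
    {P : Finset ℕ} (hP : ∀ s ∈ P, s.Prime ∧ A1 < s ∧ s ≤ A)
    (hsep : ∀ n ∈ N, ∀ n' ∈ N, n ≠ n' → ∀ m : ℤ, |m| ≤ h → n - n' ≠ m)
    (hp : 5 * A ^ 5 * W < p) (hp2 : A ^ 2 < p) (hh : 2 * A * W ≤ A1 * h) (hA : A ^ 2 ≤ A1 ^ 3)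
    (hWh : W ≤ h) (hWp : 2 * A * W < p) {S : Finset (ZMod p)}
    (hS : ∀ n ∈ N, ∀ w < W, ∀ s ∈ P, ((w : ZMod p) - n) / s ∈ S) :
    (#N * W * #P) ^ 2 ≤
      #S * (#N * W * #P + (W / A1 + 1) * (5 * #N ^ 2 + 2 * (#N * #P ^ 2))) := by
  classical
  have hsp : ∀ s ∈ P, (s : ZMod p) ≠ 0 := fun s hs =>
    natCast_ne_zero_of_lt (hP s hs).1.pos (lt_of_le_of_lt ((hP s hs).2.2.trans
      (Nat.le_self_pow two_ne_zero A)) hp2)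
  have hc := sq_card_le_card_mul_card_collision (N ×ˢ range W ×ˢ P) S
    (fun x => ((x.2.1 : ZMod p) - x.1) / x.2.2) (by
      rintro ⟨n, w, s⟩ hx
      simp only [mem_product, mem_range] at hx
      exact hS n hx.1 w hx.2.1 s hx.2.2)
  have hX : #(N ×ˢ range W ×ˢ P) = #N * W * #P := by simp [card_product, mul_assoc]
  rw [hX] at hc
  refine hc.trans (Nat.mul_le_mul_left _ ?_)
  refine le_trans (le_of_eq ?_) (card_collision_le hP hsep hp hp2 hh hA hWh hWp)
  congr 1
  refine filter_congr ?_
  rintro ⟨⟨n, w, s⟩, n', w', s'⟩ hq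
  simp only [mem_product] at hq
  exact div_eq_div_iff (hsp s hq.1.2.2) (hsp s' hq.2.2.2)

/-! ### From boxes to quadratic residues -/

/-- One coordinate of a box containing two given points; its corner is the residue of
`min x y - 1`. -/
theorem exists_box_coord {p H : ℕ} (hp : 0 < p) {x y : ℤ} (h : |x - y| < H) :
    ∃ X : ℤ, (0 ≤ X ∧ X ≤ (p : ℤ) - 1) ∧
      (∃ i : ℤ, 1 ≤ i ∧ i ≤ (H : ℤ) ∧ Int.ModEq (p : ℤ) (x % p) (X + i)) ∧
      (∃ i : ℤ, 1 ≤ i ∧ i ≤ (H : ℤ) ∧ Int.ModEq (p : ℤ) (y % p) (X + i)) := by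
  have hp' : (0 : ℤ) < p := by exact_mod_cast hp
  have key : ∀ z : ℤ, Int.ModEq (p : ℤ) (z % p) ((min x y - 1) % p + (z - (min x y - 1))) := by
    intro z
    have h1 : Int.ModEq (p : ℤ) (z % p) z := Int.mod_modEq _ _
    have h2 : Int.ModEq (p : ℤ) ((min x y - 1) % p + (z - (min x y - 1)))
      ((min x y - 1) + (z - (min x y - 1))) := (Int.mod_modEq _ _).add_right _
    rw [add_sub_cancel] at h2
    exact h1.trans h2.symm
  rw [abs_lt] at h
  refine ⟨(min x y - 1) % p, ⟨Int.emod_nonneg _ hp'.ne', ?_⟩,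
    ⟨x - (min x y - 1), ?_, ?_, key x⟩, ⟨y - (min x y - 1), ?_, ?_, key y⟩⟩
  · have := Int.emod_lt_of_pos (min x y - 1) hp'
    omega
  all_goals omega

/-- The hypothesis on boxes in translation-invariant form: two points of the cubic whose coordinates
differ by less than `H` lie in a common box with corner reduced modulo `p`. -/
theorem not_two_close {p : ℕ} (hp : 0 < p) {a c : ℤ} {H : ℕ}
    (hbox : ∀ X Y : ℤ, 0 ≤ X → X ≤ (p : ℤ) - 1 → 0 ≤ Y → Y ≤ (p : ℤ) - 1 →
      (cubicPoints p a c ∩ box p X Y H).ncard ≤ 1)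
    {x1 x2 y1 y2 : ℤ} (hx : |x1 - x2| < H) (hy : |y1 - y2| < H)
    (h1 : Int.ModEq (p : ℤ) y1 (a * x1 ^ 3 + c * x1))
    (h2 : Int.ModEq (p : ℤ) y2 (a * x2 ^ 3 + c * x2)) : Int.ModEq (p : ℤ) x1 x2 := by
  obtain ⟨X, hX, hX1, hX2⟩ := exists_box_coord hp hx
  obtain ⟨Y, hY, hY1, hY2⟩ := exists_box_coord hp hy
  have hb := hbox X Y hX.1 hX.2 hY.1 hY.2
  have hp' : (0 : ℤ) < p := by exact_mod_cast hp
  have hfin : (cubicPoints p a c ∩ box p X Y H).Finite := by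
    refine Set.Finite.subset ((Icc (0 : ℤ) (p - 1)) ×ˢ (Icc (0 : ℤ) (p - 1))).finite_toSet ?_
    rintro ⟨x, y⟩ ⟨⟨a1, a2, a3, a4, -⟩, -⟩
    simp only [coe_product, Set.mem_prod, mem_coe, mem_Icc]
    exact ⟨⟨a1, a2⟩, a3, a4⟩
  have hmem : ∀ x y : ℤ, Int.ModEq (p : ℤ) y (a * x ^ 3 + c * x) →
      (x % p, y % p) ∈ cubicPoints p a c := by
    intro x y h
    refine ⟨Int.emod_nonneg _ hp'.ne', ?_, Int.emod_nonneg _ hp'.ne', ?_, ?_⟩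
    · have := Int.emod_lt_of_pos x hp'
      simp only; omega
    · have := Int.emod_lt_of_pos y hp'
      simp only; omega
    · have hxm : Int.ModEq (p : ℤ) (x % p) x := Int.mod_modEq _ _
      exact ((Int.mod_modEq y p).trans h).trans
        (((hxm.pow 3).mul_left a).add (hxm.mul_left c)).symm
  have := (Set.ncard_le_one hfin).1 hb _ ⟨hmem x1 y1 h1, hX1, hY1⟩ _ ⟨hmem x2 y2 h2, hX2, hY2⟩
  exact (Prod.mk.inj this).1

theorem cubic_sub_ne {p : ℕ} [Fact p.Prime] {a c : ℤ} {H : ℕ} (hHp : H ≤ p)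
    (hbox : ∀ X Y : ℤ, 0 ≤ X → X ≤ (p : ℤ) - 1 → 0 ≤ Y → Y ≤ (p : ℤ) - 1 →
      (cubicPoints p a c ∩ box p X Y H).ncard ≤ 1)
    {u v : ℤ} (hu0 : u ≠ 0) (hu : |u| < H) (hv : |v| < H) (x : ZMod p) :
    (a * (x + u) ^ 3 + c * (x + u)) - (a * x ^ 3 + c * x) ≠ (v : ZMod p) := by
  intro h
  have hp : 0 < p := (Fact.out : p.Prime).pos
  have hx : ((x.val : ℤ) : ZMod p) = x := by simp
  have := not_two_close hp hbox (x1 := x.val + u) (x2 := x.val)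
    (y1 := a * (x.val : ℤ) ^ 3 + c * x.val + v) (y2 := a * (x.val : ℤ) ^ 3 + c * x.val)
    (by simpa using hu) (by simpa using hv) (by
      rw [← ZMod.intCast_eq_intCast_iff]
      push_cast
      push_cast at hx
      rw [hx, ← h]; ring) (Int.ModEq.refl _)
  rw [← ZMod.intCast_eq_intCast_iff] at this
  push_cast at this
  have h0 : ((u : ℤ) : ZMod p) = ((0 : ℤ) : ZMod p) := by
    push_cast; linear_combination this
  refine hu0 (eq_of_intCast_eq_of_abs_lt h0 ?_)
  have : (H : ℤ) ≤ p := by exact_mod_cast hHp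
  simpa using hu.trans_le this

theorem three_mul_ne_zero {p : ℕ} [Fact p.Prime] (h3 : 3 < p) {a : ℤ} (ha : IsCoprime a (p : ℤ))
    {m : ℕ} (hm : 0 < m) (hmp : m < p) : (3 * a * m : ZMod p) ≠ 0 := by
  refine mul_ne_zero (mul_ne_zero ?_ ?_) (natCast_ne_zero_of_lt hm hmp)
  · have := natCast_ne_zero_of_lt (p := p) (s := 3) (by norm_num) h3
    exact_mod_cast this
  · intro h
    rw [ZMod.intCast_zmod_eq_zero_iff_dvd] at h
    have hu := ha.isUnit_of_dvd' h dvd_rfl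
    rw [Int.isUnit_iff] at hu
    have : 0 < p := by omega
    omega

/-- The passage from boxes to quadratic residues. The values at `x + m` and `x - m` differ by
`2 (3 a m x² + a m³ + c m)`, which is never `2 v`; hence `(v - (a m³ + c m)) / (3 a m)` is not a
square. -/
theorem quadraticChar_shift {p : ℕ} [Fact p.Prime] (h3 : 3 < p) {a c : ℤ}
    (ha : IsCoprime a (p : ℤ)) {H : ℕ} (hHp : H ≤ p)
    (hbox : ∀ X Y : ℤ, 0 ≤ X → X ≤ (p : ℤ) - 1 → 0 ≤ Y → Y ≤ (p : ℤ) - 1 →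
      (cubicPoints p a c ∩ box p X Y H).ncard ≤ 1)
    {m : ℕ} (hm : 0 < m) (hmH : 2 * m < H) {v : ℕ} (hv : 2 * v < H) :
    quadraticChar (ZMod p) (v - (a * m ^ 3 + c * m)) = - quadraticChar (ZMod p) (3 * a * m) := by
  have he := three_mul_ne_zero h3 ha hm (by omega : m < p)
  set e : ZMod p := 3 * a * m with hedef
  set t : ZMod p := v - (a * m ^ 3 + c * m) with ht
  have hns : quadraticChar (ZMod p) (t / e) = -1 := by
    rw [quadraticChar_neg_one_iff_not_isSquare]
    rintro ⟨x, hx⟩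
    rw [div_eq_iff he] at hx
    refine cubic_sub_ne hHp hbox (u := 2 * m) (v := 2 * v) (by omega) ?_ ?_ (x - m) ?_
    · rw [abs_lt]; omega
    · rw [abs_lt]; omega
    · push_cast
      rw [ht, hedef] at hx
      linear_combination (-2) * hx
  have : t = e * (t / e) := by field_simp
  rw [this, map_mul, hns]; ring

/-- Runs of length `k ≥ log₂ p` of constant quadratic character start at only `O(k √p)` residues. -/
theorem card_pattern_le {p : ℕ} [Fact p.Prime] (h3 : 3 < p) {k : ℕ} (hk : 0 < k)
    (hk2 : p ≤ 2 ^ k) (hkp : (2 * k + 4) ^ 2 ≤ p) (δ : ℤ) (hδ : δ = 1 ∨ δ = -1) :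
    (#{z : ZMod p | ∀ t : ℕ, 1 ≤ t → t ≤ k → quadraticChar (ZMod p) (z + t) = δ} : ℝ) ≤
      32 * k * √p := by
  classical
  have hkp' : k < p := by nlinarith
  set B : Finset (ZMod p) := (Icc 1 k).image (fun t : ℕ => -(t : ZMod p)) with hB
  have hcard : #B = k := by
    rw [hB, card_image_of_injOn]
    · simp
    · intro x hx y hy hxy
      simp only [coe_Icc, Set.mem_Icc] at hx hy
      have hxy : ((x : ℤ) : ZMod p) = ((y : ℤ) : ZMod p) := by
        push_cast; exact neg_injective hxy
      have := eq_of_intCast_eq_of_abs_lt hxy (by rw [abs_lt]; omega)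
      exact_mod_cast this
  have hB0 : 0 ∉ B := by
    intro h
    rw [hB, mem_image] at h
    obtain ⟨t, ht, h0⟩ := h
    rw [mem_Icc] at ht
    exact natCast_ne_zero_of_lt (by omega) (by omega) (neg_eq_zero.1 h0)
  have hp2 : p ≠ 2 := by omega
  have := card_constant_pattern_le hp2 B hB0 δ hδ (by rw [hcard]; exact hkp)
  have hset : ({z : ZMod p | ∀ t : ℕ, 1 ≤ t → t ≤ k → quadraticChar (ZMod p) (z + t) = δ} :
      Finset (ZMod p)) = ({z : ZMod p | ∀ b ∈ B, quadraticChar (ZMod p) (z - b) = δ} :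
      Finset (ZMod p)) := by
    refine filter_congr fun z _ => ?_
    simp only [hB, mem_image, mem_Icc]
    constructor
    · rintro h b ⟨t, ht, rfl⟩
      rw [sub_neg_eq_add]
      exact h t ht.1 ht.2
    · intro h t h1 h2
      rw [← sub_neg_eq_add]
      exact h _ ⟨t, ⟨h1, h2⟩, rfl⟩
  rw [hset]
  rw [hcard] at this
  set M : ℝ := ((#({z : ZMod p | ∀ b ∈ B, quadraticChar (ZMod p) (z - b) = δ} :
      Finset (ZMod p)) : ℕ) : ℝ) with hM
  have hk2' : (p : ℝ) ≤ 2 ^ k := by exact_mod_cast hk2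
  have h2k : (0 : ℝ) < 2 ^ k := by positivity
  have h1 : M ≤ 1 + 31 * k * √p := by
    refine le_of_mul_le_mul_left ?_ h2k
    calc (2 : ℝ) ^ k * M ≤ p + 2 ^ k * (31 * k * √p) := this
      _ ≤ 2 ^ k * (1 + 31 * k * √p) := by linarith
  have h2 : (1 : ℝ) ≤ k := by exact_mod_cast hk
  have h4 : (1 : ℝ) ≤ √p := by
    rw [Real.one_le_sqrt]; exact_mod_cast (by omega : 1 ≤ p)
  nlinarith

/-- The combinatorial core. With `n = a m³ + c m`, the residues `z = (w - n) / s` for `m ≤ J`,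
`w < J`, `s ∈ P` all have a run `z + 1, …, z + k` of constant quadratic character, so
`sq_card_le_of_image` is played against `card_pattern_le`. -/
theorem main_inequality {p : ℕ} [Fact p.Prime] (h3 : 3 < p) {a c : ℤ}
    (ha : IsCoprime a (p : ℤ)) {H : ℕ} (hHp : H ≤ p)
    (hbox : ∀ X Y : ℤ, 0 ≤ X → X ≤ (p : ℤ) - 1 → 0 ≤ Y → Y ≤ (p : ℤ) - 1 →
      (cubicPoints p a c ∩ box p X Y H).ncard ≤ 1)
    {A A1 J k : ℕ} {P : Finset ℕ} (hP : ∀ s ∈ P, s.Prime ∧ A1 < s ∧ s ≤ A)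
    (hp : 5 * A ^ 5 * J < p) (hp2 : A ^ 2 < p) (hh : 2 * A * J ≤ A1 * (H - 1))
    (hA : A ^ 2 ≤ A1 ^ 3) (hJp : 2 * A * J < p) (hJH : 2 * (J + k * A) < H)
    (hk : 0 < k) (hk2 : p ≤ 2 ^ k) (hkp : (2 * k + 4) ^ 2 ≤ p) :
    ((J * J * #P : ℝ)) ^ 2 ≤ 64 * k * √p *
      (J * J * #P + ((J / A1 : ℕ) + 1) * (5 * J ^ 2 + 2 * (J * #P ^ 2))) := by
  classical
  have hJ2 : 2 * J < H := lt_of_le_of_lt (by gcongr; exact Nat.le_add_right _ _) hJH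
  set f : ℕ → ZMod p := fun m => a * m ^ 3 + c * m with hf
  have hfsep : ∀ m ∈ Icc 1 J, ∀ m' ∈ Icc 1 J, m ≠ m' → ∀ v : ℤ, |v| ≤ (H - 1 : ℕ) →
      f m - f m' ≠ v := by
    intro m hm m' hm' hne v hv heq
    rw [mem_Icc] at hm hm'
    refine cubic_sub_ne hHp hbox (u := (m : ℤ) - m') (v := v) (by omega)
      (by rw [abs_lt]; omega) (by omega) (m' : ZMod p) ?_
    rw [← heq, hf]
    push_cast
    ring
  have hinj : Set.InjOn f (Icc 1 J : Finset ℕ) := by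
    intro m hm m' hm' heq
    by_contra hne
    exact hfsep m hm m' hm' hne 0 (by simp) (by rw [heq]; simp)
  set N := (Icc 1 J).image f with hN
  have hNcard : #N = J := by rw [hN, card_image_of_injOn hinj]; simp
  have hsep : ∀ n ∈ N, ∀ n' ∈ N, n ≠ n' → ∀ m : ℤ, |m| ≤ (H - 1 : ℕ) → n - n' ≠ m := by
    intro n hn n' hn' hne v hv
    rw [hN, mem_image] at hn hn'
    obtain ⟨m, hm, rfl⟩ := hn
    obtain ⟨m', hm', rfl⟩ := hn'
    exact hfsep m hm m' hm' (fun h => hne (by rw [h])) v hv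
  set S : ℤ → Finset (ZMod p) := fun δ =>
    {z : ZMod p | ∀ t : ℕ, 1 ≤ t → t ≤ k → quadraticChar (ZMod p) (z + t) = δ} with hSdef
  have hS : ∀ n ∈ N, ∀ w < J, ∀ s ∈ P, ((w : ZMod p) - n) / s ∈ S 1 ∪ S (-1) := by
    intro n hn w hw s hs
    rw [hN, mem_image] at hn
    obtain ⟨m, hm, rfl⟩ := hn
    rw [mem_Icc] at hm
    have hs0 : (s : ZMod p) ≠ 0 := natCast_ne_zero_of_lt (hP s hs).1.pos
      (lt_of_le_of_lt ((hP s hs).2.2.trans (Nat.le_self_pow two_ne_zero A)) hp2)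
    have he := three_mul_ne_zero h3 ha hm.1 (by omega : m < p)
    set δ : ℤ := -quadraticChar (ZMod p) (3 * a * m) * quadraticChar (ZMod p) s with hδ
    have key : ((w : ZMod p) - f m) / s ∈ S δ := by
      rw [hSdef, mem_filter]
      refine ⟨mem_univ _, fun t ht1 htk => ?_⟩
      -- `z + t = (w + t s - n) / s`, and `w + t s` stays in the range of `quadraticChar_shift`.
      have hts : t * s ≤ k * A := Nat.mul_le_mul htk (hP s hs).2.2
      have h1 := quadraticChar_shift h3 ha hHp hbox hm.1 (by omega) (v := w + t * s) (by omega)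
      have h2 : (((w + t * s : ℕ) : ZMod p) - (a * m ^ 3 + c * m)) =
          (((w : ZMod p) - f m) / s + t) * s := by
        rw [hf]; push_cast; field_simp; ring
      rw [h2, map_mul] at h1
      have h3 := quadraticChar_sq_one hs0
      calc quadraticChar (ZMod p) (((w : ZMod p) - f m) / s + t)
          = quadraticChar (ZMod p) (((w : ZMod p) - f m) / s + t) * quadraticChar (ZMod p) s *
            quadraticChar (ZMod p) s := by rw [mul_assoc, ← sq, h3, mul_one]
        _ = δ := by rw [h1]
    have hδ1 : δ = 1 ∨ δ = -1 := by
      rcases quadraticChar_dichotomy he with h | h <;>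
        rcases quadraticChar_dichotomy hs0 with h' | h' <;> rw [hδ, h, h'] <;> simp
    rw [mem_union]
    rcases hδ1 with h | h
    · left; rwa [h] at key
    · right; rwa [h] at key
  have hmain := sq_card_le_of_image hP hsep hp hp2 hh hA (by omega) hJp hS
  rw [hNcard] at hmain
  have hSle : (#(S 1 ∪ S (-1)) : ℝ) ≤ 64 * k * √p := by
    have h1 := card_pattern_le h3 hk hk2 hkp 1 (Or.inl rfl)
    have h2 := card_pattern_le h3 hk hk2 hkp (-1) (Or.inr rfl)
    have h3 : (#(S 1 ∪ S (-1)) : ℝ) ≤ #(S 1) + #(S (-1)) := by exact_mod_cast card_union_le _ _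
    simp only [hSdef] at h3 ⊢
    linarith
  have hmain' : ((J * J * #P : ℝ)) ^ 2 ≤ #(S 1 ∪ S (-1)) *
      (J * J * #P + ((J / A1 : ℕ) + 1) * (5 * J ^ 2 + 2 * (J * #P ^ 2))) := by
    exact_mod_cast hmain
  exact hmain'.trans (by gcongr)

/-! ### Choice of parameters -/

open scoped Nat.Prime in
theorem primeCounting_eq_card (A : ℕ) : π A = #{s ∈ range (A + 1) | s.Prime} := by
  rw [Nat.primeCounting, Nat.primeCounting', Nat.count_eq_card_filter_range]

open scoped Nat.Prime in
/-- There are at most `A1` primes up to `A1`, so half of the primes up to `A` exceed `A1 = π A / 2`. -/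
theorem le_card_primes_Ioc (A : ℕ) {A1 : ℕ} (h : A1 = π A / 2) :
    A1 ≤ #{s ∈ range (A + 1) | s.Prime ∧ A1 < s} := by
  have h1 := primeCounting_eq_card A
  have h2 : #{s ∈ range (A + 1) | s.Prime} ≤
      #{s ∈ range (A + 1) | s.Prime ∧ A1 < s} + #(Icc 1 A1) := by
    refine le_trans (card_le_card ?_) (card_union_le _ _)
    intro s hs
    simp only [mem_union, mem_filter, mem_Icc] at hs ⊢
    have := hs.2.one_lt
    by_cases h : A1 < s
    · exact Or.inl ⟨hs.1, hs.2, h⟩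
    · exact Or.inr ⟨by omega, by omega⟩
  rw [Nat.card_Icc] at h2
  omega

/-- The inequality of `main_inequality` fails for `J ≈ y T ^ 8`, `y = p ^ (1 / 6)`, when `T` is large
but smaller than a small power of `y`. Here `b` bounds the primes from below, `P` is their number, and
`q` is the quotient `⌊J / b⌋`. -/
theorem final_inequality_false {J b P T y k q : ℝ} (hT : 2000 ≤ T) (hy : T ^ 100 ≤ y)
    (hkT : k ≤ T) (hJ1 : y * T ^ 8 < J + 1)
    (hb : 1 ≤ b) (hby : y ≤ b * T ^ 10) (hbP : b ≤ P) (hPb : P ≤ T * b) (hbJ : b ≤ J)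
    (hJb : J ≤ b ^ 2) (hq0 : 0 ≤ q) (hq : q ≤ J / b)
    (h : (J * J * P) ^ 2 ≤ 64 * k * y ^ 3 *
      (J * J * P + (q + 1) * (5 * J ^ 2 + 2 * (J * P ^ 2)))) : False := by
  have hT0 : 0 < T := by linarith
  have hy0 : 0 < y := lt_of_lt_of_le (by positivity) hy
  have hb0 : 0 < b := by linarith
  have hJ0 : 0 < J := by linarith
  have hP0 : 0 < P := by linarith
  have hq2 : q + 1 ≤ 2 * (J / b) := by
    have : 1 ≤ J / b := by rw [le_div_iff₀ hb0]; linarith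
    linarith
  have e1 : J / b * J ^ 2 ≤ J * J * P := by
    have : J / b ≤ P := by rw [div_le_iff₀ hb0]; nlinarith
    calc J / b * J ^ 2 ≤ P * J ^ 2 := by gcongr
      _ = J * J * P := by ring
  have e2 : J / b * (J * P ^ 2) ≤ T * (J * J * P) := by
    have : P / b ≤ T := by rw [div_le_iff₀ hb0]; linarith
    calc J / b * (J * P ^ 2) = P / b * (J * J * P) := by ring
      _ ≤ _ := by gcongr
  have e3 : (q + 1) * (5 * J ^ 2 + 2 * (J * P ^ 2)) ≤ (10 + 4 * T) * (J * J * P) := by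
    calc (q + 1) * (5 * J ^ 2 + 2 * (J * P ^ 2))
        ≤ 2 * (J / b) * (5 * J ^ 2 + 2 * (J * P ^ 2)) := by gcongr
      _ = 10 * (J / b * J ^ 2) + 4 * (J / b * (J * P ^ 2)) := by ring
      _ ≤ 10 * (J * J * P) + 4 * (T * (J * J * P)) := by gcongr
      _ = _ := by ring
  have hM : 0 < J * J * P := by positivity
  have e4 : (J * J * P) * (J * J * P) ≤ (320 * T ^ 2 * y ^ 3) * (J * J * P) := by
    calc (J * J * P) * (J * J * P) = (J * J * P) ^ 2 := by ring
      _ ≤ _ := h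
      _ ≤ 64 * T * y ^ 3 * (J * J * P + (10 + 4 * T) * (J * J * P)) := by gcongr
      _ = 64 * T * y ^ 3 * (11 + 4 * T) * (J * J * P) := by ring
      _ ≤ 64 * T * y ^ 3 * (5 * T) * (J * J * P) := by gcongr; linarith
      _ = _ := by ring
  have e5 := le_of_mul_le_mul_right e4 hM
  have hT1 : (1 : ℝ) ≤ T := by linarith
  have hy2 : 2 ≤ y * T ^ 8 := by
    have a1 : T ≤ T ^ 100 := le_self_pow₀ hT1 (by norm_num)
    have a2 : 1 ≤ T ^ 8 := one_le_pow₀ hT1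
    nlinarith
  have hJ2 : y * T ^ 8 / 2 ≤ J := by linarith
  have e6 : y ^ 3 * T ^ 6 / 4 ≤ J * J * P := by
    have hyb : y / T ^ 10 ≤ P := (by rw [div_le_iff₀ (by positivity)]; exact hby : _ ≤ b).trans hbP
    calc y ^ 3 * T ^ 6 / 4 = (y * T ^ 8 / 2) * (y * T ^ 8 / 2) * (y / T ^ 10) := by
          field_simp; norm_num
      _ ≤ _ := by gcongr
  have e7 : (y ^ 3 * T ^ 2) * T ^ 4 ≤ (y ^ 3 * T ^ 2) * 1280 := by linarith
  have e8 := le_of_mul_le_mul_left e7 (by positivity)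
  have : T ≤ T ^ 4 := le_self_pow₀ hT1 (by norm_num)
  linarith

set_option maxHeartbeats 1000000 in
open scoped Nat.Prime in
/-- The bound `H < p ^ (1 / 6) T ^ 16`, where `y = p ^ (1 / 6)` and `T` is a small power of `p`
dominating the logarithms. The primes are those between `π A / 2` and `A`, with `A = ⌊y / T ^ 8⌋`, and
`J = ⌊y T ^ 8⌋`. -/
theorem not_large {p : ℕ} [Fact p.Prime] (h3 : 3 < p) {a c : ℤ}
    (ha : IsCoprime a (p : ℤ)) {H : ℕ} (hHp : H ≤ p)
    (hbox : ∀ X Y : ℤ, 0 ≤ X → X ≤ (p : ℤ) - 1 → 0 ≤ Y → Y ≤ (p : ℤ) - 1 →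
      (cubicPoints p a c ∩ box p X Y H).ncard ≤ 1)
    {y T : ℝ} (hy0 : 0 < y) (hyp : y ^ 6 = p) (hT : 2000 ≤ T) (hy : T ^ 100 ≤ y)
    (hkT : (Nat.clog 2 p : ℝ) ≤ T)
    (hπ : (⌊y / T ^ 8⌋₊ : ℝ) ≤ T * (π ⌊y / T ^ 8⌋₊ / 2 : ℕ)) :
    (H : ℝ) < y * T ^ 16 := by
  by_contra! hH
  set A := ⌊y / T ^ 8⌋₊ with hA
  set J := ⌊y * T ^ 8⌋₊ with hJ
  set b := π A / 2 with hb
  set k := Nat.clog 2 p with hk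
  set P := ({s ∈ range (A + 1) | s.Prime ∧ b < s} : Finset ℕ) with hPdef
  have hT0 : 0 < T := by linarith
  have hT1 : 1 ≤ T := by linarith
  have tpow : ∀ i j : ℕ, i ≤ j → T ^ i ≤ T ^ j := fun i j h => pow_le_pow_right₀ hT1 h
  have tpow' : ∀ i : ℕ, 0 < T ^ i := fun i => by positivity
  have hAy : (A : ℝ) * T ^ 8 ≤ y := by
    rw [← le_div_iff₀ (tpow' 8)]; exact Nat.floor_le (by positivity)
  have hAy2 : y < ((A : ℝ) + 1) * T ^ 8 := by
    rw [← div_lt_iff₀ (tpow' 8)]; exact Nat.lt_floor_add_one _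
  have hJy : (J : ℝ) ≤ y * T ^ 8 := Nat.floor_le (by positivity)
  have hJy2 : y * T ^ 8 < (J : ℝ) + 1 := Nat.lt_floor_add_one _
  have hb1 : (1 : ℝ) ≤ b := by
    by_contra! hlt
    have hb0 : b = 0 := by
      have : b < 1 := by exact_mod_cast hlt
      omega
    rw [hb0] at hπ
    simp only [Nat.cast_zero, mul_zero] at hπ
    have := tpow 8 100 (by norm_num)
    nlinarith [tpow' 8]
  have hby : y ≤ b * T ^ 10 := by
    have h1 : (A : ℝ) + 1 ≤ T ^ 2 * b := by nlinarith
    calc y ≤ ((A : ℝ) + 1) * T ^ 8 := hAy2.le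
      _ ≤ (T ^ 2 * b) * T ^ 8 := by gcongr
      _ = _ := by ring
  have hTb : T ^ 90 ≤ b := by
    refine le_of_mul_le_mul_right ?_ (tpow' 10)
    calc T ^ 90 * T ^ 10 = T ^ 100 := by ring
      _ ≤ _ := hy.trans hby
  have hAle : (A : ℝ) ≤ y := by nlinarith [one_le_pow₀ hT1 (n := 8), Nat.cast_nonneg (α := ℝ) A]
  have hyJ : y ≤ J := by
    have h1 : y * T ≤ y * T ^ 8 := by gcongr; exact le_self_pow₀ hT1 (by norm_num)
    have h2 : (1 : ℝ) ≤ y := (one_le_pow₀ hT1).trans hy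
    nlinarith
  have hbA : (b : ℝ) ≤ A := by
    have : π A ≤ A := by
      rw [primeCounting_eq_card]
      have : ({s ∈ range (A + 1) | s.Prime} : Finset ℕ) ⊆ Icc 1 A := by
        intro s hs
        rw [mem_filter, mem_range] at hs
        rw [mem_Icc]
        exact ⟨hs.2.pos, by omega⟩
      simpa using card_le_card this
    exact_mod_cast (by omega : b ≤ A)
  have hy1 : (1 : ℝ) ≤ y := (one_le_pow₀ hT1).trans hy
  have hy2 : y ^ 2 < y ^ 6 := pow_lt_pow_right₀ (by linarith [le_self_pow₀ hT1 (n := 100) (by norm_num)]) (by norm_num)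
  have hJb : (J : ℝ) ≤ b ^ 2 := by
    refine le_of_mul_le_mul_right ?_ (tpow' 20)
    calc (J : ℝ) * T ^ 20 ≤ y * T ^ 8 * T ^ 20 := by gcongr
      _ = y * T ^ 28 := by ring
      _ ≤ y * y := by gcongr; exact (tpow 28 100 (by norm_num)).trans hy
      _ ≤ (b * T ^ 10) * (b * T ^ 10) := by gcongr
      _ = _ := by ring
  have hJA : 5 * A ^ 5 * J < p := by
    have : (5 * A ^ 5 * J : ℝ) < p := by
      rw [← hyp]
      calc (5 * A ^ 5 * J : ℝ) ≤ 5 * A ^ 5 * (y * T ^ 8) := by gcongr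
        _ < T ^ 32 * A ^ 5 * (y * T ^ 8) := by
          have : 0 < (A : ℝ) := by linarith
          gcongr
          exact lt_of_lt_of_le (by linarith) (le_self_pow₀ hT1 (by norm_num : 32 ≠ 0))
        _ = (A * T ^ 8) ^ 5 * y := by ring
        _ ≤ y ^ 5 * y := by gcongr
        _ = y ^ 6 := by ring
    exact_mod_cast this
  have hApos : 0 < A := by
    have : (0 : ℝ) < A := by linarith
    exact_mod_cast this
  have hAp : A ^ 2 < p := by
    have : (A ^ 2 : ℝ) < p := by
      rw [← hyp]
      refine lt_of_le_of_lt ?_ hy2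
      gcongr
    exact_mod_cast this
  have hTH : y * T ^ 16 = y * T ^ 8 * T ^ 8 := by ring
  have hyT8 : 1 ≤ y * T ^ 8 := by nlinarith [one_le_pow₀ hT1 (n := 8)]
  have hT8 : T * T ≤ T ^ 8 := by rw [← sq]; exact tpow 2 8 (by norm_num)
  have hyT9 : 2 * T * (y * T ^ 8) ≤ (H : ℝ) - 1 := by
    have a1 : y * T ^ 8 * (T * T) ≤ y * T ^ 8 * T ^ 8 := by gcongr
    have a2 : T * (y * T ^ 8) * 2000 ≤ T * (y * T ^ 8) * T := by gcongr
    have a3 : 1 ≤ T * (y * T ^ 8) := one_le_mul_of_one_le_of_one_le hT1 hyT8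
    linarith
  have hHpos : 1 ≤ H := by
    have : (1 : ℝ) ≤ H := by
      have : 0 ≤ 2 * T * (y * T ^ 8) := by positivity
      linarith
    exact_mod_cast this
  have hh : 2 * A * J ≤ b * (H - 1) := by
    have : (2 * A * J : ℝ) ≤ b * ((H - 1 : ℕ) : ℝ) := by
      rw [Nat.cast_sub hHpos]
      push_cast
      calc (2 * A * J : ℝ) ≤ 2 * (T * b) * (y * T ^ 8) := by gcongr
        _ = b * (2 * T * (y * T ^ 8)) := by ring
        _ ≤ b * (H - 1) := by gcongr
    exact_mod_cast this
  have hA3 : A ^ 2 ≤ b ^ 3 := by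
    have : (A ^ 2 : ℝ) ≤ b ^ 3 := by
      calc (A ^ 2 : ℝ) ≤ (T * b) ^ 2 := by gcongr
        _ = T ^ 2 * b ^ 2 := by ring
        _ ≤ b * b ^ 2 := by gcongr; exact (tpow 2 90 (by norm_num)).trans hTb
        _ = _ := by ring
    exact_mod_cast this
  have hJp : 2 * A * J < p := by
    refine lt_of_le_of_lt ?_ hJA
    gcongr
    · norm_num
    · exact Nat.le_self_pow (by norm_num) A
  have hJH : 2 * (J + k * A) < H := by
    have : (2 * (J + k * A) : ℝ) < H := by
      have h1 : (k : ℝ) * A ≤ T * y := by gcongr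
      have h2 : T * y ≤ y * T ^ 8 := by
        rw [mul_comm]; gcongr; exact le_self_pow₀ hT1 (by norm_num)
      have h3 : (2000 : ℝ) ≤ T ^ 8 := hT.trans (le_self_pow₀ hT1 (by norm_num))
      nlinarith
    exact_mod_cast this
  have hk0 : 0 < k := Nat.clog_pos (by norm_num) (by omega)
  have hkp : (2 * k + 4) ^ 2 ≤ p := by
    have : ((2 * k + 4) ^ 2 : ℝ) ≤ p := by
      rw [← hyp]
      calc ((2 * k + 4) ^ 2 : ℝ) ≤ (T * T) ^ 2 := by gcongr; nlinarith
        _ = T ^ 4 := by ring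
        _ ≤ T ^ 100 := tpow 4 100 (by norm_num)
        _ ≤ y := hy
        _ ≤ y ^ 6 := le_self_pow₀ hy1 (by norm_num)
    exact_mod_cast this
  have hP : ∀ s ∈ P, s.Prime ∧ b < s ∧ s ≤ A := by
    intro s hs
    rw [hPdef, mem_filter, mem_range] at hs
    exact ⟨hs.2.1, hs.2.2, by omega⟩
  have hmain := main_inequality h3 ha hHp hbox hP hJA hAp hh hA3 hJp hJH hk0
    (Nat.le_pow_clog (by norm_num) _) hkp
  have hsq : √(p : ℝ) = y ^ 3 := by
    rw [← hyp, show y ^ 6 = (y ^ 3) ^ 2 by ring, Real.sqrt_sq (by positivity)]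
  rw [hsq] at hmain
  have hbP : (b : ℝ) ≤ #P := by exact_mod_cast le_card_primes_Ioc A hb
  have hPA : (#P : ℝ) ≤ A := by
    have : P ⊆ Icc 1 A := by
      intro s hs
      rw [mem_Icc]
      exact ⟨(hP s hs).1.pos, (hP s hs).2.2⟩
    have := card_le_card this
    rw [Nat.card_Icc] at this
    exact_mod_cast this
  exact final_inequality_false hT hy hkT hJy2 hb1 hby hbP (hPA.trans hπ)
    (hbA.trans (hAle.trans hyJ)) hJb (Nat.cast_nonneg _) Nat.cast_div_le hmain

open Filter Asymptotics in
open scoped Nat.Prime in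
/-- Chebyshev's lower bound in the form in which it is used. -/
theorem eventually_le_primeCounting :
    ∀ᶠ A : ℕ in atTop, (A : ℝ) ≤ 8 * Real.log A * (π A / 2 : ℕ) := by
  have h1 : ∀ᶠ x : ℝ in atTop, ‖Real.log x‖ ≤ (1 / 16 : ℝ) * ‖x‖ :=
    Real.isLittleO_log_id_atTop.def (by norm_num)
  have h1' := (tendsto_natCast_atTop_atTop (R := ℝ)).eventually h1
  filter_upwards [h1', eventually_ge_atTop 16] with A hA h16
  have hA16 : (16 : ℝ) ≤ A := by exact_mod_cast h16
  have hlog0 : 0 < Real.log A := Real.log_pos (by linarith)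
  rw [Real.norm_of_nonneg hlog0.le, Real.norm_of_nonneg (by linarith)] at hA
  have hlog1 : Real.log (A + 1) ≤ Real.log A + 1 / 16 := by
    have : Real.log ((A + 1) / A) ≤ (A + 1) / A - 1 :=
      Real.log_le_sub_one_of_pos (by positivity)
    rw [Real.log_div (by positivity) (by positivity)] at this
    have h2 : ((A : ℝ) + 1) / A - 1 = 1 / A := by field_simp; ring
    have h3 : (1 : ℝ) / A ≤ 1 / 16 := by gcongr
    linarith
  have hpi := Chebyshev.pi_ge A
  rw [div_le_iff₀ hlog0] at hpi
  have hl2 : (0.6931471803 : ℝ) < Real.log 2 := Real.log_two_gt_d9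
  have h2 : (A : ℝ) / 2 ≤ π A * Real.log A := by nlinarith
  have h3 : (π A : ℝ) ≤ 2 * (π A / 2 : ℕ) + 1 := by
    exact_mod_cast (by omega : π A ≤ 2 * (π A / 2) + 1)
  nlinarith

theorem clog_le_log {p : ℕ} (hp : 3 < p) : (Nat.clog 2 p : ℝ) ≤ 3 * Real.log p := by
  have h1 : 2 ^ (Nat.clog 2 p - 1) < p := Nat.pow_pred_clog_lt_self (by norm_num) (by omega)
  have hk0 : 0 < Nat.clog 2 p := Nat.clog_pos (by norm_num) (by omega)
  have h2 : ((2 : ℝ) ^ (Nat.clog 2 p - 1)) ≤ p := by exact_mod_cast h1.le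
  have h3 := Real.log_le_log (by positivity) h2
  rw [Real.log_pow, Nat.cast_sub hk0] at h3
  have h4 : (4 : ℝ) ≤ p := by exact_mod_cast hp
  have h5 := Real.log_le_log (by norm_num) h4
  rw [show (4 : ℝ) = 2 ^ 2 by norm_num, Real.log_pow] at h5
  have hl2 : (0.6931471803 : ℝ) < Real.log 2 := Real.log_two_gt_d9
  push_cast at h3 h5
  nlinarith

open Filter Asymptotics in
open scoped Nat.Prime in
/-- The conditions on `T = p ^ (η / 8)` required by `not_large` hold for large `p`. -/
theorem eventually_params {η : ℝ} (hη : 0 < η) (hη1 : η ≤ 1 / 100) :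
    ∀ᶠ p : ℕ in atTop, 2000 ≤ (p : ℝ) ^ (η / 8) ∧ (Nat.clog 2 p : ℝ) ≤ (p : ℝ) ^ (η / 8) ∧
      (⌊(p : ℝ) ^ (1 / 6 : ℝ) / ((p : ℝ) ^ (η / 8)) ^ 8⌋₊ : ℝ) ≤ (p : ℝ) ^ (η / 8) *
        (π ⌊(p : ℝ) ^ (1 / 6 : ℝ) / ((p : ℝ) ^ (η / 8)) ^ 8⌋₊ / 2 : ℕ) := by
  have hη8 : 0 < η / 8 := by positivity
  have t1 : Tendsto (fun p : ℕ => (p : ℝ) ^ (η / 8)) atTop atTop :=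
    (tendsto_rpow_atTop hη8).comp tendsto_natCast_atTop_atTop
  have t2 : ∀ᶠ p : ℕ in atTop, ‖Real.log p‖ ≤ (1 / 8 : ℝ) * ‖(p : ℝ) ^ (η / 8)‖ :=
    (tendsto_natCast_atTop_atTop (R := ℝ)).eventually
      ((isLittleO_log_rpow_atTop hη8).def (by norm_num))
  have t3 : Tendsto (fun p : ℕ => ⌊(p : ℝ) ^ (1 / 6 : ℝ) / ((p : ℝ) ^ (η / 8)) ^ 8⌋₊)
      atTop atTop := by
    have : Tendsto (fun p : ℕ => ⌊(p : ℝ) ^ (1 / 6 - η : ℝ)⌋₊) atTop atTop :=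
      tendsto_nat_floor_atTop.comp
        ((tendsto_rpow_atTop (by linarith)).comp tendsto_natCast_atTop_atTop)
    refine this.congr' ?_
    filter_upwards [eventually_gt_atTop 0] with p hp
    have hp' : (0 : ℝ) < p := by exact_mod_cast hp
    congr 1
    rw [← Real.rpow_mul_natCast hp'.le, ← Real.rpow_sub hp']
    congr 1
    push_cast; ring
  filter_upwards [t1.eventually_ge_atTop 2000, t2, t3.eventually eventually_le_primeCounting,
    t3.eventually_ge_atTop 1, eventually_gt_atTop 3] with p h1 h2 h3 h4 h5
  have hp1 : (1 : ℝ) ≤ p := by exact_mod_cast (by omega : 1 ≤ p)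
  have hlog : 0 ≤ Real.log p := Real.log_nonneg hp1
  rw [Real.norm_of_nonneg hlog, Real.norm_of_nonneg (by positivity)] at h2
  refine ⟨h1, ?_, ?_⟩
  · have := clog_le_log h5
    linarith
  · refine h3.trans ?_
    set A := ⌊(p : ℝ) ^ (1 / 6 : ℝ) / ((p : ℝ) ^ (η / 8)) ^ 8⌋₊ with hA
    have hAp : (A : ℝ) ≤ p := by
      calc (A : ℝ) ≤ (p : ℝ) ^ (1 / 6 : ℝ) / ((p : ℝ) ^ (η / 8)) ^ 8 := Nat.floor_le (by positivity)
        _ ≤ (p : ℝ) ^ (1 / 6 : ℝ) := div_le_self (by positivity) (one_le_pow₀ (by linarith))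
        _ ≤ (p : ℝ) ^ (1 : ℝ) := Real.rpow_le_rpow_of_exponent_le hp1 (by norm_num)
        _ = p := Real.rpow_one _
    have hA0 : (0 : ℝ) < A := by exact_mod_cast h4
    have := Real.log_le_log hA0 hAp
    gcongr
    linarith

end

/-- For every ε > 0 and positive integer r there is C(ε, r) > 0 such that: if p > 3
is prime, gcd(a, p) = 1, c ∈ ℤ, 0 < H ≤ p, and every box B(X, Y; H) contains at most
one point of C_{a,c}, then H ≤ C(ε, r) p^((r+1)/(6r) + ε). -/
theorem sparse_boxes_implies_H_small :
    ∀ ε : ℝ, 0 < ε → ∀ r : ℕ, 0 < r → ∃ C : ℝ, 0 < C ∧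
      ∀ p : ℕ, p.Prime → 3 < p →
        ∀ a : ℤ, IsCoprime a (p : ℤ) →
          ∀ c : ℤ, ∀ H : ℕ, 0 < H → H ≤ p →
            (∀ X Y : ℤ, 0 ≤ X → X ≤ (p : ℤ) - 1 → 0 ≤ Y → Y ≤ (p : ℤ) - 1 →
              (cubicPoints p a c ∩ box p X Y H).ncard ≤ 1) →
            (H : ℝ) ≤ C * (p : ℝ) ^ (((r : ℝ) + 1) / (6 * r) + ε) := by
  intro ε hε r hr
  -- The exponent `1 / 6 + 2 η` is at most the required one, for every `r`.
  set η : ℝ := min (ε / 2) (1 / 100) with hη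
  have hη0 : 0 < η := by positivity
  have hη1 : η ≤ 1 / 100 := min_le_right _ _
  have hη2 : 2 * η ≤ ε := by
    have : η ≤ ε / 2 := min_le_left _ _
    linarith
  obtain ⟨p0, hp0⟩ := Filter.eventually_atTop.1 (eventually_params hη0 hη1)
  refine ⟨p0 + 1, by positivity, ?_⟩
  intro p hp h3 a ha c H hH hHp hbox
  have hr' : (0 : ℝ) < r := by exact_mod_cast hr
  have hp1 : (1 : ℝ) ≤ p := by exact_mod_cast (by omega : 1 ≤ p)
  have hppos : (0 : ℝ) < p := by linarith
  have hexp : 1 / 6 + 2 * η ≤ ((r : ℝ) + 1) / (6 * r) + ε := by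
    have : (1 : ℝ) / 6 ≤ ((r : ℝ) + 1) / (6 * r) := by
      rw [div_le_div_iff₀ (by norm_num) (by positivity)]; linarith
    linarith
  have hpow1 : (1 : ℝ) ≤ (p : ℝ) ^ (((r : ℝ) + 1) / (6 * r) + ε) :=
    Real.one_le_rpow hp1 (by positivity)
  -- Below `p0` the trivial bound `H ≤ p` suffices.
  rcases lt_or_ge p p0 with hlt | hge
  · have : (H : ℝ) ≤ p0 := by exact_mod_cast (by omega : H ≤ p0)
    nlinarith
  · obtain ⟨q1, q2, q3⟩ := hp0 p hge
    have : Fact p.Prime := ⟨hp⟩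
    have hlt := not_large h3 ha hHp hbox (y := (p : ℝ) ^ (1 / 6 : ℝ)) (T := (p : ℝ) ^ (η / 8))
      (by positivity) (by rw [← Real.rpow_mul_natCast hppos.le]; norm_num) q1
      (by
        rw [← Real.rpow_mul_natCast hppos.le]
        exact Real.rpow_le_rpow_of_exponent_le hp1 (by push_cast; linarith)) q2 q3
    have heq : (p : ℝ) ^ (1 / 6 : ℝ) * ((p : ℝ) ^ (η / 8)) ^ 16 = (p : ℝ) ^ (1 / 6 + 2 * η) := by
      rw [← Real.rpow_mul_natCast hppos.le, ← Real.rpow_add hppos]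
      congr 1
      push_cast; ring
    rw [heq] at hlt
    have h2 := Real.rpow_le_rpow_of_exponent_le hp1 hexp
    have hp00 : (0 : ℝ) ≤ p0 := Nat.cast_nonneg _
    nlinarith
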